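/- For n ≥ 96, sat_3(n, Berge-K4) = n: the minimum number of hyperedges in an n-vertex 3-uniform Berge-K4-saturated hypergraph equals n. -/

import Mathlib

variable {V : Type*} [DecidableEq V]

/-- A Berge-K4 in the hyperedge set `E` with core vertices `a,b,c,d`:
four distinct vertices together with six distinct hyperedges, one assigned
to each pair of core vertices, each containing its assigned pair. -/
def IsBergeK4Core (E : Finset (Finset V)) (a b c d : V) : Prop :=
  a ≠ b ∧ a ≠ c ∧ a ≠ d ∧ b ≠ c ∧ b ≠ d ∧ c ≠ d ∧
  ∃ fab fac fad fbc fbd fcd : Finset V,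
    fab ∈ E ∧ fac ∈ E ∧ fad ∈ E ∧ fbc ∈ E ∧ fbd ∈ E ∧ fcd ∈ E ∧
    ([fab, fac, fad, fbc, fbd, fcd] : List (Finset V)).Nodup ∧
    a ∈ fab ∧ b ∈ fab ∧ a ∈ fac ∧ c ∈ fac ∧ a ∈ fad ∧ d ∈ fad ∧
    b ∈ fbc ∧ c ∈ fbc ∧ b ∈ fbd ∧ d ∈ fbd ∧ c ∈ fcd ∧ d ∈ fcd

/-- `E` contains a Berge-K4. -/
def IsBergeK4 (E : Finset (Finset V)) : Prop :=
  ∃ a b c d : V, IsBergeK4Core E a b c d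

/-- Every hyperedge has exactly 3 vertices. -/
def Is3Uniform (E : Finset (Finset V)) : Prop := ∀ e ∈ E, e.card = 3

/-- The degree of a vertex: the number of hyperedges containing it. -/
def hdeg (E : Finset (Finset V)) (v : V) : ℕ := (E.filter fun e => v ∈ e).card

/-- A 3-uniform Berge-K4-saturated hypergraph on the (finite) vertex type `V`:
it is 3-uniform, Berge-K4-free, and adding any non-hyperedge (3-element subset
of the vertices not already a hyperedge) creates a Berge-K4. -/
def IsSaturated [Fintype V] (E : Finset (Finset V)) : Prop :=
  Is3Uniform E ∧ ¬ IsBergeK4 E ∧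
    ∀ e : Finset V, e.card = 3 → e ∉ E → IsBergeK4 (insert e E)

/-- The pair `(u,v)` is good: there are two further vertices `x,y` (so that
`u,v,x,y` are four distinct vertices) and five distinct hyperedges, one for
each pair among `u,v,x,y` other than `uv`, each containing its assigned pair;
i.e. adding an edge on `{u,v}` completes a Berge-K4 with core `{u,v,x,y}`. -/
def GoodPair (E : Finset (Finset V)) (u v : V) : Prop :=
  ∃ x y : V, u ≠ v ∧ u ≠ x ∧ u ≠ y ∧ v ≠ x ∧ v ≠ y ∧ x ≠ y ∧
  ∃ eux euy evx evy exy : Finset V,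
    eux ∈ E ∧ euy ∈ E ∧ evx ∈ E ∧ evy ∈ E ∧ exy ∈ E ∧
    ([eux, euy, evx, evy, exy] : List (Finset V)).Nodup ∧
    u ∈ eux ∧ x ∈ eux ∧ u ∈ euy ∧ y ∈ euy ∧
    v ∈ evx ∧ x ∈ evx ∧ v ∈ evy ∧ y ∈ evy ∧
    x ∈ exy ∧ y ∈ exy

/-- The saturation number `sat_3(n, Berge-K4)`: the minimum number of
hyperedges over all `n`-vertex 3-uniform Berge-K4-saturated hypergraphs. -/
noncomputable def satNumber (n : ℕ) : ℕ :=
  sInf {m : ℕ | ∃ E : Finset (Finset (Fin n)), IsSaturated E ∧ E.card = m}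

set_option linter.unusedSectionVars false

theorem GoodPair.symm {E : Finset (Finset V)} {u v : V} (h : GoodPair E u v) :
    GoodPair E v u := by
  obtain ⟨x, y, huv, hux, huy, hvx, hvy, hxy, eux, euy, evx, evy, exy,
    h1, h2, h3, h4, h5, hn, m1, m2, m3, m4, m5, m6, m7, m8, m9, m10⟩ := h
  refine ⟨x, y, huv.symm, hvx, hvy, hux, huy, hxy, evx, evy, eux, euy, exy,
    h3, h4, h1, h2, h5, ?_, m5, m6, m7, m8, m1, m2, m3, m4, m9, m10⟩
  grind

theorem IsSaturated.exists_goodPair [Fintype V] {E : Finset (Finset V)} (hE : IsSaturated E)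
    {e : Finset V} (he : e.card = 3) (heE : e ∉ E) :
    ∃ u ∈ e, ∃ v ∈ e, GoodPair E u v := by
  obtain ⟨a, b, c, d, hab, hac, had, hbc, hbd, hcd, fab, fac, fad, fbc, fbd, fcd,
    h1, h2, h3, h4, h5, h6, hn, m1, m2, m3, m4, m5, m6, m7, m8, m9, m10, m11, m12⟩ :=
    hE.2.2 e he heE
  have key : ∀ f, f ∈ insert e E → f ≠ e → f ∈ E := fun f hf hne =>
    (Finset.mem_insert.1 hf).resolve_left hne
  simp only [List.nodup_cons, List.mem_cons, List.not_mem_nil, or_false, not_or] at hn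
  by_cases k1 : fab = e
  · subst k1
    exact ⟨a, m1, b, m2, c, d, hab, hac, had, hbc, hbd, hcd, fac, fad, fbc, fbd, fcd,
      by grind, by grind, by grind, by grind, by grind, by grind,
      m3, m4, m5, m6, m7, m8, m9, m10, m11, m12⟩
  by_cases k2 : fac = e
  · subst k2
    exact ⟨a, m3, c, m4, b, d, hac, hab, had, hbc.symm, hcd, hbd, fab, fad, fbc, fcd, fbd,
      by grind, by grind, by grind, by grind, by grind, by grind,
      m1, m2, m5, m6, m8, m7, m11, m12, m9, m10⟩
  by_cases k3 : fad = e
  · subst k3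
    exact ⟨a, m5, d, m6, b, c, had, hab, hac, hbd.symm, hcd.symm, hbc, fab, fac, fbd, fcd, fbc,
      by grind, by grind, by grind, by grind, by grind, by grind,
      m1, m2, m3, m4, m10, m9, m12, m11, m7, m8⟩
  by_cases k4 : fbc = e
  · subst k4
    exact ⟨b, m7, c, m8, a, d, hbc, hab.symm, hbd, hac.symm, hcd, had, fab, fbd, fac, fcd, fad,
      by grind, by grind, by grind, by grind, by grind, by grind,
      m2, m1, m9, m10, m4, m3, m11, m12, m5, m6⟩
  by_cases k5 : fbd = e
  · subst k5
    exact ⟨b, m9, d, m10, a, c, hbd, hab.symm, hbc, had.symm, hcd.symm, hac, fab, fbc, fad, fcd, fac,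
      by grind, by grind, by grind, by grind, by grind, by grind,
      m2, m1, m7, m8, m6, m5, m12, m11, m3, m4⟩
  by_cases k6 : fcd = e
  · subst k6
    exact ⟨c, m11, d, m12, a, b, hcd, hac.symm, hbc.symm, had.symm, hbd.symm, hab,
      fac, fbc, fad, fbd, fab,
      by grind, by grind, by grind, by grind, by grind, by grind,
      m4, m3, m8, m7, m6, m5, m10, m9, m1, m2⟩
  exact absurd ⟨a, b, c, d, hab, hac, had, hbc, hbd, hcd, fab, fac, fad, fbc, fbd, fcd,
    key _ h1 k1, key _ h2 k2, key _ h3 k3, key _ h4 k4, key _ h5 k5, key _ h6 k6,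
    by grind, m1, m2, m3, m4, m5, m6, m7, m8, m9, m10, m11, m12⟩ hE.2.1

theorem GoodPair.ne {E : Finset (Finset V)} {u v : V} (h : GoodPair E u v) : u ≠ v := by
  obtain ⟨x, y, huv, -⟩ := h
  exact huv

theorem IsSaturated.goodPair_or [Fintype V] {E : Finset (Finset V)} (hE : IsSaturated E)
    {u v w : V} (huv : u ≠ v) (huw : u ≠ w) (hvw : v ≠ w) (h : {u, v, w} ∉ E) :
    GoodPair E u v ∨ GoodPair E u w ∨ GoodPair E v w := by
  obtain ⟨p, hp, q, hq, hpq⟩ :=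
    hE.exists_goodPair (Finset.card_eq_three.2 ⟨u, v, w, huv, huw, hvw, rfl⟩) h
  have hne := hpq.ne
  have hqp := hpq.symm
  simp only [Finset.mem_insert, Finset.mem_singleton] at hp hq
  rcases hp with rfl | rfl | rfl <;> rcases hq with rfl | rfl | rfl <;> tauto

theorem two_le_hdeg {E : Finset (Finset V)} {v : V} {f g : Finset V} (hf : f ∈ E) (hg : g ∈ E)
    (hfg : f ≠ g) (hvf : v ∈ f) (hvg : v ∈ g) : 2 ≤ hdeg E v := by
  rw [hdeg, ← Finset.card_pair hfg]
  apply Finset.card_le_card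
  grind

theorem three_le_hdeg {E : Finset (Finset V)} {v : V} {f g k : Finset V} (hf : f ∈ E)
    (hg : g ∈ E) (hk : k ∈ E) (hfg : f ≠ g) (hfk : f ≠ k) (hgk : g ≠ k)
    (hvf : v ∈ f) (hvg : v ∈ g) (hvk : v ∈ k) : 3 ≤ hdeg E v := by
  rw [hdeg, ← Finset.card_eq_three.2 ⟨f, g, k, hfg, hfk, hgk, rfl⟩]
  apply Finset.card_le_card
  grind

/-- `f` and `g` are the two hyperedges at the degree-two vertex `x`. -/
def EdgesAt (E : Finset (Finset V)) (x : V) (f g : Finset V) : Prop :=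
  f ∈ E ∧ g ∈ E ∧ f ≠ g ∧ x ∈ f ∧ x ∈ g ∧ ∀ k ∈ E, x ∈ k → k = f ∨ k = g

theorem exists_edgesAt {E : Finset (Finset V)} {x : V} (h : hdeg E x = 2) :
    ∃ f g, EdgesAt E x f g := by
  obtain ⟨f, g, hne, hfg⟩ := Finset.card_eq_two.1 h
  have hm : ∀ k, (k ∈ E ∧ x ∈ k) ↔ k = f ∨ k = g := fun k => by
    simpa using Finset.ext_iff.1 hfg k
  exact ⟨f, g, ((hm f).2 (.inl rfl)).1, ((hm g).2 (.inr rfl)).1, hne, ((hm f).2 (.inl rfl)).2,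
    ((hm g).2 (.inr rfl)).2, fun k hk hxk => (hm k).1 ⟨hk, hxk⟩⟩

theorem EdgesAt.symm {E : Finset (Finset V)} {x : V} {f g : Finset V} (h : EdgesAt E x f g) :
    EdgesAt E x g f := by
  obtain ⟨h1, h2, h3, h4, h5, h6⟩ := h
  exact ⟨h2, h1, h3.symm, h5, h4, fun k hk hx => (h6 k hk hx).symm⟩

theorem EdgesAt.hdeg_eq {E : Finset (Finset V)} {x : V} {f g : Finset V} (h : EdgesAt E x f g) :
    hdeg E x = 2 := by
  obtain ⟨h1, h2, h3, h4, h5, h6⟩ := h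
  rw [hdeg, Finset.card_eq_two]
  exact ⟨f, g, h3, by ext k; grind⟩

theorem edgesAt_of_mem {E : Finset (Finset V)} {x : V} (h : hdeg E x = 2) {f : Finset V}
    (hf : f ∈ E) (hx : x ∈ f) : ∃ g, EdgesAt E x f g := by
  obtain ⟨k, g, hkg⟩ := exists_edgesAt h
  rcases hkg.2.2.2.2.2 f hf hx with rfl | rfl
  · exact ⟨g, hkg⟩
  · exact ⟨k, hkg.symm⟩

theorem edgesAt_of_mem_of_mem {E : Finset (Finset V)} {x : V} (h : hdeg E x = 2)
    {f g : Finset V} (hf : f ∈ E) (hx : x ∈ f) (hg : g ∈ E) (hxg : x ∈ g) (hfg : f ≠ g) :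
    EdgesAt E x f g := by
  obtain ⟨k, hk⟩ := edgesAt_of_mem h hf hx
  rcases hk.2.2.2.2.2 g hg hxg with rfl | rfl
  · exact absurd rfl hfg
  · exact hk

theorem GoodPair.two_le_hdeg {E : Finset (Finset V)} {u v : V} (h : GoodPair E u v) :
    2 ≤ hdeg E u := by
  obtain ⟨x, y, huv, hux, huy, hvx, hvy, hxy, eux, euy, evx, evy, exy,
    h1, h2, h3, h4, h5, hn, m1, m2, m3, m4, m5, m6, m7, m8, m9, m10⟩ := h
  exact _root_.two_le_hdeg h1 h2 (by grind) m1 m3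

/-- The shape of a good pair one of whose vertices has degree two. -/
theorem GoodPair.exists_of_edgesAt {E : Finset (Finset V)} {x c : V} {f₁ f₂ : Finset V}
    (h : GoodPair E x c) (hx : EdgesAt E x f₁ f₂) :
    ∃ p q, p ∈ f₁ ∧ q ∈ f₂ ∧ p ≠ x ∧ q ≠ x ∧ p ≠ c ∧ q ≠ c ∧ p ≠ q ∧
      3 ≤ hdeg E p ∧ 3 ≤ hdeg E q ∧
      ∃ g₁ ∈ E, ∃ g₂ ∈ E, ∃ k ∈ E, g₁ ≠ g₂ ∧ g₁ ≠ k ∧ g₂ ≠ k ∧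
        x ∉ g₁ ∧ x ∉ g₂ ∧ x ∉ k ∧
        c ∈ g₁ ∧ p ∈ g₁ ∧ c ∈ g₂ ∧ q ∈ g₂ ∧ p ∈ k ∧ q ∈ k := by
  obtain ⟨p, q, huv, hux, huy, hvx, hvy, hxy, e1, e2, e3, e4, e5,
    h1, h2, h3, h4, h5, hn, m1, m2, m3, m4, m5, m6, m7, m8, m9, m10⟩ := h
  obtain ⟨-, -, -, -, -, hall⟩ := hx
  simp only [List.nodup_cons, List.mem_cons, List.not_mem_nil, or_false, not_or] at hn
  have hdp : 3 ≤ hdeg E p := three_le_hdeg h1 h3 h5 (by tauto) (by tauto) (by tauto) m2 m6 m9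
  have hdq : 3 ≤ hdeg E q := three_le_hdeg h2 h4 h5 (by tauto) (by tauto) (by tauto) m4 m8 m10
  have a1 := hall e1 h1 m1
  have a2 := hall e2 h2 m3
  have b3 : x ∉ e3 := fun hh => by have := hall e3 h3 hh; grind
  have b4 : x ∉ e4 := fun hh => by have := hall e4 h4 hh; grind
  have b5 : x ∉ e5 := fun hh => by have := hall e5 h5 hh; grind
  have hc : (e1 = f₁ ∧ e2 = f₂) ∨ (e1 = f₂ ∧ e2 = f₁) := by grind
  rcases hc with ⟨rfl, rfl⟩ | ⟨rfl, rfl⟩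
  · exact ⟨p, q, m2, m4, hux.symm, huy.symm, hvx.symm, hvy.symm, hxy, hdp, hdq,
      e3, h3, e4, h4, e5, h5, by tauto, by tauto, by tauto, b3, b4, b5, m5, m6, m7, m8, m9, m10⟩
  · exact ⟨q, p, m4, m2, huy.symm, hux.symm, hvy.symm, hvx.symm, hxy.symm, hdq, hdp,
      e4, h4, e3, h3, e5, h5, by tauto, by tauto, by tauto, b4, b3, b5, m7, m8, m5, m6, m10, m9⟩

/-- Two vertices of degree two in a common hyperedge do not form a good pair. -/
theorem not_goodPair_of_mem {E : Finset (Finset V)} {x y : V} {f : Finset V}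
    (hx : hdeg E x = 2) (hy : hdeg E y = 2) (hf : f ∈ E) (hxf : x ∈ f) (hyf : y ∈ f) :
    ¬ GoodPair E x y := by
  intro h
  obtain ⟨g, hg⟩ := edgesAt_of_mem hx hf hxf
  obtain ⟨g', hg'⟩ := edgesAt_of_mem hy hf hyf
  obtain ⟨p, q, -, -, -, -, -, -, -, -, -, g₁, h1, g₂, h2, k, -, hne, -, -, n1, n2, -,
    m1, -, m2, -⟩ := h.exists_of_edgesAt hg
  rcases hg'.2.2.2.2.2 g₁ h1 m1 with rfl | rfl <;>
    rcases hg'.2.2.2.2.2 g₂ h2 m2 with rfl | rfl <;> tauto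

theorem exists_notMem_of_card_lt [Fintype V] (s : Finset V) (h : s.card < Fintype.card V) :
    ∃ v, v ∉ s := by
  by_contra! hs
  have : s = Finset.univ := Finset.eq_univ_iff_forall.2 hs
  rw [this, Finset.card_univ] at h
  exact lt_irrefl _ h

theorem sum_card_filter_mem (F : Finset (Finset V)) (S : Finset V) :
    ∑ v ∈ S, (F.filter fun f => v ∈ f).card = ∑ f ∈ F, (S.filter fun v => v ∈ f).card :=
  Finset.sum_card_bipartiteAbove_eq_sum_card_bipartiteBelow (fun v f => v ∈ f)

theorem sum_hdeg [Fintype V] {E : Finset (Finset V)} (hE : Is3Uniform E) :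
    ∑ v, hdeg E v = 3 * E.card := by
  unfold hdeg
  rw [sum_card_filter_mem, mul_comm, ← smul_eq_mul, ← Finset.sum_const]
  refine Finset.sum_congr rfl fun f hf => ?_
  rw [← hE f hf]
  congr 1
  ext v
  simp

/-- At most one vertex has degree at most one. -/
theorem IsSaturated.card_hdeg_le_one [Fintype V] {E : Finset (Finset V)} (hE : IsSaturated E)
    (hV : 6 ≤ Fintype.card V) : (Finset.univ.filter fun v => hdeg E v ≤ 1).card ≤ 1 := by
  rw [Finset.card_le_one]
  intro u hu v hv
  by_contra huv
  simp only [Finset.mem_filter, Finset.mem_univ, true_and] at hu hv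
  have hdu : ((E.filter fun f => u ∈ f).biUnion id).card ≤ 3 := by
    have h : ((E.filter fun f => u ∈ f).biUnion id).card ≤ hdeg E u * 3 :=
      Finset.card_biUnion_le_card_mul _ _ 3 fun f hf => (hE.1 f (Finset.mem_filter.1 hf).1).le
    omega
  obtain ⟨w, hw⟩ := exists_notMem_of_card_lt
    (insert u (insert v ((E.filter fun f => u ∈ f).biUnion id))) (by
      have h1 := Finset.card_insert_le u (insert v ((E.filter fun f => u ∈ f).biUnion id))
      have h2 := Finset.card_insert_le v ((E.filter fun f => u ∈ f).biUnion id)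
      omega)
  simp only [Finset.mem_insert, Finset.mem_biUnion, Finset.mem_filter, id, not_or, not_exists,
    not_and] at hw
  obtain ⟨hwu, hwv, hw⟩ := hw
  rcases hE.goodPair_or huv (Ne.symm hwu) (Ne.symm hwv)
    (fun h => hw {u, v, w} ⟨h, by simp⟩ (by simp)) with h | h | h
  · have := h.two_le_hdeg; omega
  · have := h.two_le_hdeg; omega
  · have := h.two_le_hdeg; omega

/-- The total amount by which degrees exceed three. -/
def excess [Fintype V] (E : Finset (Finset V)) : ℕ := ∑ v, (hdeg E v - 3)

/-- The vertices of degree two. -/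
def deg2 [Fintype V] (E : Finset (Finset V)) : Finset V := Finset.univ.filter fun v => hdeg E v = 2

theorem mem_deg2 [Fintype V] {E : Finset (Finset V)} {v : V} : v ∈ deg2 E ↔ hdeg E v = 2 := by
  simp [deg2]

theorem excess_le [Fintype V] {E : Finset (Finset V)} (hE : IsSaturated E)
    (hV : 6 ≤ Fintype.card V) (hlt : E.card < Fintype.card V) : excess E ≤ (deg2 E).card := by
  have h1 := hE.card_hdeg_le_one hV
  have h2 := sum_hdeg hE.1
  have h3 : ∑ v : V, (3 + (hdeg E v - 3)) ≤
      ∑ v : V, (hdeg E v + (if hdeg E v = 2 then 1 else 0) +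
        3 * (if hdeg E v ≤ 1 then 1 else 0)) := by
    refine Finset.sum_le_sum fun v _ => ?_
    split_ifs <;> omega
  rw [Finset.sum_add_distrib, Finset.sum_add_distrib, Finset.sum_add_distrib, ← Finset.mul_sum,
    Finset.sum_boole, Finset.sum_boole, h2] at h3
  simp only [Finset.sum_const, Finset.card_univ, smul_eq_mul, Nat.cast_id] at h3
  unfold excess deg2
  omega

theorem sum_hdeg_le [Fintype V] (E : Finset (Finset V)) (S : Finset V) :
    ∑ v ∈ S, hdeg E v ≤ 3 * S.card + excess E := by
  calc ∑ v ∈ S, hdeg E v ≤ ∑ v ∈ S, (3 + (hdeg E v - 3)) :=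
        Finset.sum_le_sum fun v _ => by omega
    _ = 3 * S.card + ∑ v ∈ S, (hdeg E v - 3) := by
        rw [Finset.sum_add_distrib, Finset.sum_const, smul_eq_mul, mul_comm]
    _ ≤ 3 * S.card + excess E := by
        gcongr
        exact Finset.sum_le_sum_of_subset (Finset.subset_univ S)

/-- The neighbours of a vertex. -/
def nbr (E : Finset (Finset V)) (u : V) : Finset V :=
  (E.filter fun f => u ∈ f).biUnion fun f => f.erase u

theorem mem_nbr {E : Finset (Finset V)} {u v : V} :
    v ∈ nbr E u ↔ v ≠ u ∧ ∃ f ∈ E, u ∈ f ∧ v ∈ f := by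
  simp only [nbr, Finset.mem_biUnion, Finset.mem_filter, Finset.mem_erase]
  constructor
  · rintro ⟨f, ⟨h1, h2⟩, h3, h4⟩
    exact ⟨h3, f, h1, h2, h4⟩
  · rintro ⟨h3, f, h1, h2, h4⟩
    exact ⟨f, ⟨h1, h2⟩, h3, h4⟩

theorem card_nbr_le {E : Finset (Finset V)} (hE : Is3Uniform E) (u : V) :
    (nbr E u).card ≤ hdeg E u * 2 := by
  refine Finset.card_biUnion_le_card_mul _ _ 2 fun f hf => ?_
  obtain ⟨h1, h2⟩ := Finset.mem_filter.1 hf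
  rw [Finset.card_erase_of_mem h2, hE f h1]

theorem exists_close_set [Fintype V] {E : Finset (Finset V)} (hE : Is3Uniform E) {u : V}
    (hu : hdeg E u ≤ 3) : ∃ S : Finset V, S.card ≤ 19 + excess E ∧ u ∈ S ∧
      ∀ v, v ∉ S → ¬ GoodPair E u v ∧ ∀ f ∈ E, u ∈ f → v ∉ f := by
  classical
  set N := nbr E u with hN
  have hNc : N.card ≤ 6 := (card_nbr_le hE u).trans (by omega)
  set M := E.filter fun f => u ∉ f ∧ ∃ x ∈ N, x ∈ f with hM
  set T := Finset.univ.filter fun v => v ≠ u ∧ v ∉ N ∧ GoodPair E u v with hT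
  have hMc : M.card ≤ 2 * N.card + excess E := by
    have h1 : M ⊆ N.biUnion fun x => E.filter fun f => x ∈ f ∧ u ∉ f := by
      intro f hf
      simp only [hM, Finset.mem_filter] at hf
      obtain ⟨hfE, huf, x, hx, hxf⟩ := hf
      simp only [Finset.mem_biUnion, Finset.mem_filter]
      exact ⟨x, hx, hfE, hxf, huf⟩
    have h2 : ∀ x ∈ N, (E.filter fun f => x ∈ f ∧ u ∉ f).card + 1 ≤ hdeg E x := by
      intro x hx
      obtain ⟨-, f, hf, huf, hxf⟩ := mem_nbr.1 hx
      apply Finset.card_lt_card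
      refine Finset.ssubset_iff_subset_ne.2 ⟨fun g => by simp +contextual, fun h => ?_⟩
      have : f ∈ E.filter fun f => x ∈ f ∧ u ∉ f := by
        rw [h]; exact Finset.mem_filter.2 ⟨hf, hxf⟩
      exact (Finset.mem_filter.1 this).2.2 huf
    have h3 := Finset.sum_le_sum h2
    rw [Finset.sum_add_distrib, Finset.sum_const, smul_eq_mul, mul_one] at h3
    have h4 := sum_hdeg_le E N
    have h5 := (Finset.card_le_card h1).trans Finset.card_biUnion_le
    omega
  have hTM : T.card * 2 ≤ M.card * 2 := by
    refine Finset.card_mul_le_card_mul (fun v f => v ∈ f) (fun v hv => ?_) (fun f hf => ?_)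
    · obtain ⟨-, hvu, hvN, x, y, huv, hux, huy, hvx, hvy, hxy, e1, e2, e3, e4, e5,
        h1, h2, h3, h4, h5, hn, m1, m2, m3, m4, m5, m6, m7, m8, m9, m10⟩ := Finset.mem_filter.1 hv
      have hu3 : u ∉ e3 := fun h => hvN (mem_nbr.2 ⟨hvu, e3, h3, h, m5⟩)
      have hu4 : u ∉ e4 := fun h => hvN (mem_nbr.2 ⟨hvu, e4, h4, h, m7⟩)
      have h34 : e3 ≠ e4 := by grind
      rw [← Finset.card_pair h34]
      apply Finset.card_le_card
      intro f hf
      simp only [Finset.mem_insert, Finset.mem_singleton] at hf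
      simp only [Finset.mem_bipartiteAbove, hM, Finset.mem_filter]
      rcases hf with rfl | rfl
      · exact ⟨⟨h3, hu3, x, mem_nbr.2 ⟨hux.symm, e1, h1, m1, m2⟩, m6⟩, m5⟩
      · exact ⟨⟨h4, hu4, y, mem_nbr.2 ⟨huy.symm, e2, h2, m3, m4⟩, m8⟩, m7⟩
    · obtain ⟨hfE, huf, x, hx, hxf⟩ := Finset.mem_filter.1 hf
      have h2 : (f.erase x).card = 2 := by rw [Finset.card_erase_of_mem hxf, hE f hfE]
      rw [← h2]
      apply Finset.card_le_card
      intro v hv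
      obtain ⟨hvT, hvf⟩ := (Finset.mem_bipartiteBelow _).1 hv
      simp only [hT, Finset.mem_filter] at hvT
      refine Finset.mem_erase.2 ⟨?_, hvf⟩
      rintro rfl
      exact hvT.2.2.1 hx
  refine ⟨insert u (N ∪ T), ?_, by simp, fun v hv => ?_⟩
  · have h1 := Finset.card_insert_le u (N ∪ T)
    have h2 := Finset.card_union_le N T
    omega
  · simp only [Finset.mem_insert, Finset.mem_union, not_or] at hv
    obtain ⟨hvu, hvN, hvT⟩ := hv
    refine ⟨fun h => hvT ?_, fun f hf huf hvf => hvN (mem_nbr.2 ⟨hvu, f, hf, huf, hvf⟩)⟩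
    exact Finset.mem_filter.2 ⟨Finset.mem_univ _, hvu, hvN, h⟩

theorem IsSaturated.lt_excess [Fintype V] {E : Finset (Finset V)} (hE : IsSaturated E)
    (hV : 96 ≤ Fintype.card V) : 28 < excess E := by
  by_contra! hx
  have hB : (Finset.univ.filter fun v => 4 ≤ hdeg E v).card ≤ excess E := by
    rw [Finset.card_filter]
    refine Finset.sum_le_sum fun v _ => ?_
    split_ifs <;> omega
  set B := Finset.univ.filter fun v => 4 ≤ hdeg E v with hBdef
  have hB' : ∀ v, v ∉ B → hdeg E v ≤ 3 := fun v hv => by simp [hBdef] at hv; omega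
  obtain ⟨u, hu⟩ := exists_notMem_of_card_lt B (by omega)
  obtain ⟨S, hS, huS, hSu⟩ := exists_close_set hE.1 (hB' u hu)
  obtain ⟨v, hv⟩ := exists_notMem_of_card_lt (S ∪ B) (by
    have := Finset.card_union_le S B; omega)
  simp only [Finset.mem_union, not_or] at hv
  obtain ⟨T, hT, hvT, hTv⟩ := exists_close_set hE.1 (hB' v hv.2)
  obtain ⟨w, hw⟩ := exists_notMem_of_card_lt (S ∪ T) (by
    have := Finset.card_union_le S T; omega)
  simp only [Finset.mem_union, not_or] at hw
  have huv : u ≠ v := by rintro rfl; exact hv.1 huS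
  have huw : u ≠ w := by rintro rfl; exact hw.1 huS
  have hvw : v ≠ w := by rintro rfl; exact hw.2 hvT
  rcases hE.goodPair_or huv huw hvw
    (fun h => (hSu v hv.1).2 _ h (by simp) (by simp)) with h | h | h
  · exact (hSu v hv.1).1 h
  · exact (hSu w hw.1).1 h
  · exact (hTv w hw.2).1 h

/-- The third vertex of a hyperedge joining two degree-two vertices is used by every good pair
containing one of these two vertices. -/
theorem GoodPair.exists_of_edgesAt_triple {E : Finset (Finset V)} {x y a c : V} {g : Finset V}
    (h : GoodPair E x c) (hx : EdgesAt E x {x, y, a} g) (hy : hdeg E y = 2) :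
    c ≠ a ∧ 3 ≤ hdeg E a ∧ ∃ q ∈ g, q ≠ x ∧ q ≠ c ∧ q ≠ a ∧ 3 ≤ hdeg E q ∧
      ∃ g₁ ∈ E, ∃ g₂ ∈ E, ∃ k ∈ E, g₁ ≠ g₂ ∧ g₁ ≠ k ∧ g₂ ≠ k ∧
        c ∈ g₁ ∧ a ∈ g₁ ∧ c ∈ g₂ ∧ q ∈ g₂ ∧ a ∈ k ∧ q ∈ k := by
  obtain ⟨p, q, hp, hq, hpx, hqx, hpc, hqc, hpq, hdp, hdq, g₁, hg₁, g₂, hg₂, k, hk, n1, n2, n3,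
    -, -, -, m1, m2, m3, m4, m5, m6⟩ := h.exists_of_edgesAt hx
  have hpa : p = a := by
    simp only [Finset.mem_insert, Finset.mem_singleton] at hp
    rcases hp with rfl | rfl | rfl
    · exact absurd rfl hpx
    · omega
    · rfl
  subst hpa
  exact ⟨hpc.symm, hdp, q, hq, hqx, hqc, hpq.symm, hdq, g₁, hg₁, g₂, hg₂, k, hk, n1, n2, n3,
    m1, m2, m3, m4, m5, m6⟩

theorem Is3Uniform.eq_triple {E : Finset (Finset V)} (hE : Is3Uniform E) {f : Finset V}
    (hf : f ∈ E) {x y z : V} (hx : x ∈ f) (hy : y ∈ f) (hz : z ∈ f) (hxy : x ≠ y) (hxz : x ≠ z)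
    (hyz : y ≠ z) : f = {x, y, z} := by
  symm
  apply Finset.eq_of_subset_of_card_le
  · simp [Finset.insert_subset_iff, hx, hy, hz]
  · rw [hE f hf, Finset.card_eq_three.2 ⟨x, y, z, hxy, hxz, hyz, rfl⟩]

theorem Is3Uniform.exists_third {E : Finset (Finset V)} (hE : Is3Uniform E) {f : Finset V}
    (hf : f ∈ E) {x y : V} (hx : x ∈ f) (hy : y ∈ f) (hxy : x ≠ y) :
    ∃ z, z ≠ x ∧ z ≠ y ∧ f = {x, y, z} := by
  obtain ⟨z, hz⟩ : ((f.erase x).erase y).Nonempty := by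
    rw [← Finset.card_pos, Finset.card_erase_of_mem (Finset.mem_erase.2 ⟨hxy.symm, hy⟩),
      Finset.card_erase_of_mem hx, hE f hf]
    norm_num
  simp only [Finset.mem_erase] at hz
  exact ⟨z, hz.2.1, hz.1, hE.eq_triple hf hx hy hz.2.2 hxy hz.2.1.symm hz.1.symm⟩

theorem IsSaturated.goodPair_or_of_deg2 [Fintype V] {E : Finset (Finset V)} (hE : IsSaturated E)
    {x y c : V} {f : Finset V} (hx : hdeg E x = 2) (hy : hdeg E y = 2) (hxy : x ≠ y) (hf : f ∈ E)
    (hxf : x ∈ f) (hyf : y ∈ f) (hcx : c ≠ x) (hcy : c ≠ y) (hc : {x, y, c} ∉ E) :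
    GoodPair E x c ∨ GoodPair E y c :=
  (hE.goodPair_or hxy hcx.symm hcy.symm hc).resolve_left (not_goodPair_of_mem hx hy hf hxf hyf)

/-- The third vertex of a hyperedge joining two degree-two vertices has large degree. -/
theorem IsSaturated.three_le_hdeg_of_deg2 [Fintype V] {E : Finset (Finset V)}
    (hE : IsSaturated E) (hV : 7 ≤ Fintype.card V) {x y z : V} {f : Finset V} (hf : f ∈ E)
    (hxf : x ∈ f) (hyf : y ∈ f) (hzf : z ∈ f) (hx : hdeg E x = 2) (hy : hdeg E y = 2)
    (hxy : x ≠ y) (hzx : z ≠ x) (hzy : z ≠ y) : 3 ≤ hdeg E z := by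
  obtain ⟨g, hg⟩ := edgesAt_of_mem hx hf hxf
  obtain ⟨g', hg'⟩ := edgesAt_of_mem hy hf hyf
  have hfe := hE.1.eq_triple hf hxf hyf hzf hxy hzx.symm hzy.symm
  obtain ⟨c, hc⟩ := exists_notMem_of_card_lt (f ∪ g) (by
    have := Finset.card_union_le f g
    have := hE.1 f hf
    have := hE.1 g hg.2.1
    omega)
  simp only [Finset.mem_union, not_or] at hc
  have hcE : {x, y, c} ∉ E := fun h => by
    rcases hg.2.2.2.2.2 _ h (by simp) with h | h
    · exact hc.1 (h ▸ by simp)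
    · exact hc.2 (h ▸ by simp)
  rcases hE.goodPair_or_of_deg2 hx hy hxy hf hxf hyf (by rintro rfl; exact hc.1 hxf)
    (by rintro rfl; exact hc.1 hyf) hcE with h | h
  · rw [hfe] at hg
    exact (h.exists_of_edgesAt_triple hg hy).2.1
  · rw [hfe, Finset.insert_comm] at hg'
    exact (h.exists_of_edgesAt_triple hg' hx).2.1

/-- The number of hyperedges containing both `a` and `c`. -/
def pairDeg (E : Finset (Finset V)) (a c : V) : ℕ := (E.filter fun f => c ∈ f ∧ a ∈ f).card

/-- The number of hyperedges containing `c` together with `a` or `b`. -/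
def hubDeg (E : Finset (Finset V)) (a b c : V) : ℕ :=
  (E.filter fun f => c ∈ f ∧ (a ∈ f ∨ b ∈ f)).card

/-- The number of hyperedges containing `a`, `b` and `c`. -/
def bothDeg (E : Finset (Finset V)) (a b c : V) : ℕ :=
  (E.filter fun f => c ∈ f ∧ (a ∈ f ∧ b ∈ f)).card

/-- The number of hyperedges containing `c` and avoiding `a` and `b`. -/
def offDeg (E : Finset (Finset V)) (a b c : V) : ℕ :=
  (E.filter fun f => c ∈ f ∧ ¬ (a ∈ f ∨ b ∈ f)).card

/-- The hyperedges avoiding `a` and `b`. -/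
def offEdges (E : Finset (Finset V)) (a b : V) : Finset (Finset V) :=
  E.filter fun f => ¬ (a ∈ f ∨ b ∈ f)

theorem pairDeg_add_pairDeg (E : Finset (Finset V)) (a b c : V) :
    pairDeg E a c + pairDeg E b c = hubDeg E a b c + bothDeg E a b c := by
  unfold pairDeg hubDeg bothDeg
  rw [← Finset.card_union_add_card_inter, ← Finset.filter_or, ← Finset.filter_and]
  congr 3 <;> ext f <;> tauto

theorem hdeg_eq_hubDeg_add_offDeg (E : Finset (Finset V)) (a b c : V) :
    hdeg E c = hubDeg E a b c + offDeg E a b c := by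
  unfold hdeg hubDeg offDeg
  rw [← Finset.card_filter_add_card_filter_not (s := E.filter fun f => c ∈ f)
    (fun f => a ∈ f ∨ b ∈ f), Finset.filter_filter, Finset.filter_filter]

theorem sum_pairDeg [Fintype V] {E : Finset (Finset V)} (hE : Is3Uniform E) {a b : V}
    (hab : a ≠ b) :
    ∑ c ∈ (Finset.univ \ {a, b} : Finset V), (pairDeg E a c + pairDeg E b c) +
      2 * (offEdges E a b).card = 2 * E.card := by
  set P : Finset V := Finset.univ \ {a, b} with hP
  have key : ∀ d : V, ∑ c ∈ P, pairDeg E d c =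
      ∑ f ∈ E, if d ∈ f then (P.filter fun v => v ∈ f).card else 0 := by
    intro d
    rw [← Finset.sum_filter, ← sum_card_filter_mem]
    refine Finset.sum_congr rfl fun c _ => ?_
    rw [pairDeg, Finset.filter_filter]
    congr 2
    ext f
    tauto
  rw [Finset.sum_add_distrib, key, key, offEdges, Finset.card_filter, Finset.mul_sum,
    ← Finset.sum_add_distrib, ← Finset.sum_add_distrib, mul_comm, ← smul_eq_mul,
    ← Finset.sum_const]
  refine Finset.sum_congr rfl fun f hf => ?_
  have hPf : (P.filter fun v => v ∈ f) = (f.erase a).erase b := by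
    ext v
    simp only [hP, Finset.mem_filter, Finset.mem_sdiff, Finset.mem_univ, Finset.mem_insert,
      Finset.mem_singleton, Finset.mem_erase]
    tauto
  rw [hPf]
  by_cases ha : a ∈ f <;> by_cases hb : b ∈ f <;>
    simp [ha, hb, hab.symm, hE f hf]

theorem sum_offDeg_le {E : Finset (Finset V)} (hE : Is3Uniform E) (a b : V) (S : Finset V) :
    ∑ c ∈ S, offDeg E a b c ≤ 3 * (offEdges E a b).card := by
  have : ∀ c ∈ S, offDeg E a b c = ((offEdges E a b).filter fun f => c ∈ f).card := by
    intro c _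
    rw [offDeg, offEdges, Finset.filter_filter]
    congr 2
    ext f
    tauto
  rw [Finset.sum_congr rfl this, sum_card_filter_mem, mul_comm, ← smul_eq_mul, ← Finset.sum_const]
  refine Finset.sum_le_sum fun f hf => ?_
  rw [← hE f (Finset.mem_filter.1 hf).1]
  exact Finset.card_le_card fun v hv => (Finset.mem_filter.1 hv).2

/-- If every vertex shares a hyperedge with `a` and one with `b`, then few hyperedges leave
almost no slack. -/
theorem sum_pairDeg_sub_two_le [Fintype V] {E : Finset (Finset V)} (hE : Is3Uniform E) {a b : V}
    (hab : a ≠ b) (ha : ∀ c, c ≠ a → c ≠ b → 1 ≤ pairDeg E a c)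
    (hb : ∀ c, c ≠ a → c ≠ b → 1 ≤ pairDeg E b c) (hlt : E.card < Fintype.card V)
    (S : Finset V) (hSa : a ∉ S) (hSb : b ∉ S) :
    ∑ c ∈ S, (pairDeg E a c + pairDeg E b c - 2) + 2 * (offEdges E a b).card ≤ 2 := by
  have hS : S ⊆ Finset.univ \ {a, b} := by
    intro v hv
    simp only [Finset.mem_sdiff, Finset.mem_univ, Finset.mem_insert, Finset.mem_singleton,
      true_and, not_or]
    exact ⟨by rintro rfl; exact hSa hv, by rintro rfl; exact hSb hv⟩
  have h1 := sum_pairDeg hE hab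
  have h2 : ∑ c ∈ (Finset.univ \ {a, b} : Finset V), (pairDeg E a c + pairDeg E b c - 2 + 2) =
      ∑ c ∈ (Finset.univ \ {a, b} : Finset V), (pairDeg E a c + pairDeg E b c) := by
    refine Finset.sum_congr rfl fun c hc => ?_
    simp only [Finset.mem_sdiff, Finset.mem_univ, Finset.mem_insert, Finset.mem_singleton,
      true_and, not_or] at hc
    have := ha c hc.1 hc.2
    have := hb c hc.1 hc.2
    omega
  have h3 := Finset.sum_le_sum_of_subset (f := fun c => pairDeg E a c + pairDeg E b c - 2) hS
  have h4 : (Finset.univ \ {a, b} : Finset V).card = Fintype.card V - 2 := by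
    rw [Finset.card_sdiff_of_subset (Finset.subset_univ _), Finset.card_pair hab,
      Finset.card_univ]
  rw [Finset.sum_add_distrib, Finset.sum_const, smul_eq_mul, h4] at h2
  omega

/-- Away from a small set, there is a hyperedge at `a` avoiding that set. -/
theorem exists_edge_avoiding [Fintype V] {E : Finset (Finset V)} (hE : Is3Uniform E) {a b : V}
    (ha : ∀ c, c ≠ a → c ≠ b → 1 ≤ pairDeg E a c) (B : Finset V) (k : ℕ)
    (hk : ∀ r ∈ B, r ≠ a → r ≠ b → pairDeg E a r ≤ k)
    (hB : 2 + B.card * (1 + 2 * k) < Fintype.card V) :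
    ∃ w, w ≠ a ∧ w ≠ b ∧ w ∉ B ∧ ∃ f ∈ E, a ∈ f ∧ w ∈ f ∧
      ∀ v ∈ f, v ≠ a → v ≠ b → v ∉ B := by
  set N := (B.filter fun r => r ≠ a ∧ r ≠ b).biUnion fun r =>
    (E.filter fun f => r ∈ f ∧ a ∈ f).biUnion fun f => f.erase a with hN
  have hNc : N.card ≤ B.card * (2 * k) := by
    refine (Finset.card_biUnion_le_card_mul _ _ (2 * k) fun r hr => ?_).trans
      (Nat.mul_le_mul_right _ (Finset.card_filter_le _ _))
    obtain ⟨hrB, hra, hrb⟩ := Finset.mem_filter.1 hr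
    refine (Finset.card_biUnion_le_card_mul _ _ 2 fun f hf => ?_).trans ?_
    · obtain ⟨h1, -, h2⟩ := Finset.mem_filter.1 hf
      rw [Finset.card_erase_of_mem h2, hE f h1]
    · have := hk r hrB hra hrb
      unfold pairDeg at this
      omega
  obtain ⟨w, hw⟩ := exists_notMem_of_card_lt ({a, b} ∪ (B ∪ N)) (by
    have h1 := Finset.card_union_le {a, b} (B ∪ N)
    have h2 := Finset.card_union_le B N
    have h3 : ({a, b} : Finset V).card ≤ 2 := Finset.card_le_two
    rw [mul_add, mul_one] at hB
    omega)
  simp only [Finset.mem_union, Finset.mem_insert, Finset.mem_singleton, not_or] at hw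
  obtain ⟨⟨hwa, hwb⟩, hwB, hwN⟩ := hw
  obtain ⟨f, hf⟩ := Finset.card_pos.1 (ha w hwa hwb)
  obtain ⟨hfE, hwf, haf⟩ := Finset.mem_filter.1 hf
  refine ⟨w, hwa, hwb, hwB, f, hfE, haf, hwf, fun v hv hva hvb hvB => hwN ?_⟩
  simp only [hN, Finset.mem_biUnion, Finset.mem_filter, Finset.mem_erase]
  exact ⟨v, ⟨hvB, hva, hvb⟩, f, ⟨hfE, hv, haf⟩, hwa, hwf⟩

theorem IsSaturated.pairDeg_pos_of_double [Fintype V] {E : Finset (Finset V)}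
    (hE : IsSaturated E) (hV : 7 ≤ Fintype.card V) {x y x' a b : V}
    (hx : EdgesAt E x {x, y, a} {x, x', b}) (hy : hdeg E y = 2) (hx' : hdeg E x' = 2)
    (hxy : x ≠ y) (hxx' : x ≠ x') (hbx : b ≠ x) (hbx' : b ≠ x') {c : V} (hca : c ≠ a)
    (hcb : c ≠ b) : 1 ≤ pairDeg E a c ∧ 2 ≤ hdeg E c := by
  have pos : ∀ f ∈ E, c ∈ f → a ∈ f → 1 ≤ pairDeg E a c := fun f hf hc ha =>
    Finset.card_pos.2 ⟨f, Finset.mem_filter.2 ⟨hf, hc, ha⟩⟩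
  have hb3 : 3 ≤ hdeg E b := hE.three_le_hdeg_of_deg2 hV hx.2.1 (x := x) (y := x') (by simp)
    (by simp) (by simp) hx.hdeg_eq hx' hxx' hbx hbx'
  by_cases hcx : c = x
  · subst hcx
    exact ⟨pos _ hx.1 (by simp) (by simp), hx.hdeg_eq.ge⟩
  by_cases hcy : c = y
  · subst hcy
    exact ⟨pos _ hx.1 (by simp) (by simp), hy.ge⟩
  have hxyc : {x, y, c} ∉ E := by
    intro h
    rcases hx.2.2.2.2.2 _ h (by simp) with h' | h'
    · have : c ∈ ({x, y, a} : Finset V) := h' ▸ by simp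
      simp [hcx, hcy, hca] at this
    · have h1 : c ∈ ({x, x', b} : Finset V) := h' ▸ by simp
      have h2 : y ∈ ({x, x', b} : Finset V) := h' ▸ by simp
      simp only [Finset.mem_insert, Finset.mem_singleton, hcx, hcb, hxy.symm, false_or,
        or_false] at h1 h2
      rcases h2 with rfl | rfl
      · exact hcy h1
      · omega
  rcases hE.goodPair_or_of_deg2 hx.hdeg_eq hy hxy hx.1 (by simp) (by simp) hcx hcy hxyc with h | h
  · refine ⟨?_, h.symm.two_le_hdeg⟩
    obtain ⟨-, -, q, -, -, -, -, -, g, hg, -, -, -, -, -, -, -, m1, m2, -⟩ :=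
      h.exists_of_edgesAt_triple hx hy
    exact pos g hg m1 m2
  · refine ⟨?_, h.symm.two_le_hdeg⟩
    obtain ⟨g', hg'⟩ := edgesAt_of_mem hy hx.1 (by simp)
    rw [Finset.insert_comm] at hg'
    obtain ⟨-, -, q, -, -, -, -, -, g, hg, -, -, -, -, -, -, -, m1, m2, -⟩ :=
      h.exists_of_edgesAt_triple hg' hx.hdeg_eq
    exact pos g hg m1 m2

theorem mem_nbr_of_mem {E : Finset (Finset V)} {u v : V} {f : Finset V} (hf : f ∈ E) (hu : u ∈ f)
    (hv : v ∈ f) (hne : v ≠ u) : v ∈ nbr E u := mem_nbr.2 ⟨hne, f, hf, hu, hv⟩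

theorem two_le_hubDeg {E : Finset (Finset V)} {a b c : V} {f g : Finset V} (hf : f ∈ E)
    (hg : g ∈ E) (hfg : f ≠ g) (hcf : c ∈ f) (hcg : c ∈ g) (haf : a ∈ f ∨ b ∈ f)
    (hag : a ∈ g ∨ b ∈ g) : 2 ≤ hubDeg E a b c := by
  rw [hubDeg, ← Finset.card_pair hfg]
  apply Finset.card_le_card
  grind

theorem three_le_hubDeg {E : Finset (Finset V)} {a b c : V} {f g k : Finset V} (hf : f ∈ E)
    (hg : g ∈ E) (hk : k ∈ E) (hfg : f ≠ g) (hfk : f ≠ k) (hgk : g ≠ k)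
    (hcf : c ∈ f) (hcg : c ∈ g) (hck : c ∈ k) (haf : a ∈ f ∨ b ∈ f)
    (hag : a ∈ g ∨ b ∈ g) (hak : a ∈ k ∨ b ∈ k) : 3 ≤ hubDeg E a b c := by
  rw [hubDeg, ← Finset.card_eq_three.2 ⟨f, g, k, hfg, hfk, hgk, rfl⟩]
  apply Finset.card_le_card
  grind

/-- A degree-two vertex both of whose hyperedges contain a further degree-two vertex, with
distinct third vertices, forces at least as many hyperedges as vertices. -/
theorem IsSaturated.card_le_of_double [Fintype V] {E : Finset (Finset V)} (hE : IsSaturated E)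
    (hV : 96 ≤ Fintype.card V) {x y x' a b : V} (hx : EdgesAt E x {x, y, a} {x, x', b})
    (hy : hdeg E y = 2) (hx' : hdeg E x' = 2) (hxy : x ≠ y) (hxx' : x ≠ x') (hax : a ≠ x)
    (hay : a ≠ y) (hbx : b ≠ x) (hbx' : b ≠ x') (hab : a ≠ b) :
    Fintype.card V ≤ E.card := by
  by_contra! hlt
  have hA : ∀ c, c ≠ a → c ≠ b → 1 ≤ pairDeg E a c := fun c h1 h2 =>
    (hE.pairDeg_pos_of_double (by omega) hx hy hx' hxy hxx' hbx hbx' h1 h2).1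
  have hB : ∀ c, c ≠ a → c ≠ b → 1 ≤ pairDeg E b c := fun c h1 h2 =>
    (hE.pairDeg_pos_of_double (by omega) hx.symm hx' hy hxx' hxy hax hay h2 h1).1
  have hD : ∀ c, c ≠ a → c ≠ b → 2 ≤ hdeg E c := fun c h1 h2 =>
    (hE.pairDeg_pos_of_double (by omega) hx hy hx' hxy hxx' hbx hbx' h1 h2).2
  have slack := sum_pairDeg_sub_two_le hE.1 hab hA hB hlt
  have hadd := pairDeg_add_pairDeg E a b
  have hdeg' := hdeg_eq_hubDeg_add_offDeg E a b
  have slack1 : ∀ r, r ≠ a → r ≠ b →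
      pairDeg E a r + pairDeg E b r - 2 + 2 * (offEdges E a b).card ≤ 2 := by
    intro r hra hrb
    simpa using slack {r} (by simpa using hra.symm) (by simpa using hrb.symm)
  have hoff : (offEdges E a b).card ≤ 1 := by
    have := slack ∅ (by simp) (by simp)
    simp only [Finset.sum_empty, zero_add] at this
    omega
  have hx2 := hx.hdeg_eq
  have ha3 : 3 ≤ hdeg E a := hE.three_le_hdeg_of_deg2 (by omega) hx.1 (x := x) (y := y) (by simp)
    (by simp) (by simp) hx2 hy hxy hax hay
  have hb3 : 3 ≤ hdeg E b := hE.three_le_hdeg_of_deg2 (by omega) hx.2.1 (x := x) (y := x')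
    (by simp) (by simp) (by simp) hx2 hx' hxx' hbx hbx'
  have hgx : ∀ c, GoodPair E x c → c ≠ a ∧ c ≠ b ∧ ∃ k ∈ E, a ∈ k ∧ b ∈ k := by
    intro c h
    obtain ⟨p, q, hp, hq, hpx, hqx, hpc, hqc, hpq, hdp, hdq, g₁, hg₁, g₂, hg₂, k, hk, n1, n2, n3,
      -, -, -, m1, m2, m3, m4, m5, m6⟩ := h.exists_of_edgesAt hx
    simp only [Finset.mem_insert, Finset.mem_singleton] at hp hq
    have hpa : p = a := by
      rcases hp with rfl | rfl | rfl
      · exact absurd rfl hpx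
      · omega
      · rfl
    have hqb : q = b := by
      rcases hq with rfl | rfl | rfl
      · exact absurd rfl hqx
      · omega
      · rfl
    subst hpa hqb
    exact ⟨hpc.symm, hqc.symm, k, hk, m5, m6⟩
  by_cases hnab : ∀ f ∈ E, a ∈ f → b ∉ f
  · -- nothing forms a good pair with `x`
    have hR : (Finset.univ.filter fun c => (c ≠ a ∧ c ≠ b) ∧ 3 ≤ hdeg E c).card ≤ 3 := by
      set R := Finset.univ.filter fun c => (c ≠ a ∧ c ≠ b) ∧ 3 ≤ hdeg E c with hRdef
      have h1 := slack R (by simp [hRdef]) (by simp [hRdef])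
      have h2 := sum_offDeg_le hE.1 a b R
      have h3 : ∑ c ∈ R, 1 ≤ ∑ c ∈ R, ((pairDeg E a c + pairDeg E b c - 2) + offDeg E a b c) := by
        refine Finset.sum_le_sum fun c hc => ?_
        obtain ⟨-, -, h⟩ := Finset.mem_filter.1 hc
        have := hadd c
        have := hdeg' c
        omega
      rw [Finset.sum_add_distrib, Finset.sum_const, smul_eq_mul, mul_one] at h3
      omega
    set R := Finset.univ.filter fun c => (c ≠ a ∧ c ≠ b) ∧ 3 ≤ hdeg E c with hRdef
    obtain ⟨w, hwa, hwb, hw, f, hf, haf, hwf, hall⟩ := exists_edge_avoiding hE.1 hA (insert x R) 3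
      (fun r _ hra hrb => by
        have := slack1 r hra hrb
        have := hB r hra hrb
        omega) (by
        have := Finset.card_insert_le x R
        omega)
    obtain ⟨w', hwa', hww', hfe⟩ := hE.1.exists_third hf haf hwf hwa.symm
    have hwf' : w' ∈ f := by rw [hfe]; simp
    have hwb' : w' ≠ b := by rintro rfl; exact hnab f hf haf hwf'
    have hw' := hall w' hwf' hwa' hwb'
    simp only [hRdef, Finset.mem_insert, Finset.mem_filter, Finset.mem_univ, true_and, not_or,
      not_and] at hw hw'
    have hd : hdeg E w = 2 := by have := hD w hwa hwb; have := hw.2 ⟨hwa, hwb⟩; omega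
    have hd' : hdeg E w' = 2 := by have := hD w' hwa' hwb'; have := hw'.2 ⟨hwa', hwb'⟩; omega
    have hE' : {x, w, w'} ∉ E := by
      intro h
      rcases hx.2.2.2.2.2 _ h (by simp) with h' | h'
      · have : a ∈ ({x, w, w'} : Finset V) := h' ▸ by simp
        simp [hax, hwa.symm, hwa'.symm] at this
      · have : b ∈ ({x, w, w'} : Finset V) := h' ▸ by simp
        simp [hbx, hwb.symm, hwb'.symm] at this
    rcases hE.goodPair_or (Ne.symm hw.1) (Ne.symm hw'.1) hww'.symm hE' with h | h | h
    · obtain ⟨-, -, k, hk, hak, hbk⟩ := hgx _ h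
      exact hnab k hk hak hbk
    · obtain ⟨-, -, k, hk, hak, hbk⟩ := hgx _ h
      exact hnab k hk hak hbk
    · exact not_goodPair_of_mem hd hd' hf hwf hwf' h
  push Not at hnab
  obtain ⟨fab, hfab, hafab, hbfab⟩ := hnab
  obtain ⟨γ, hγa, hγb, hfabe⟩ := hE.1.exists_third hfab hafab hbfab hab
  have hγfab : γ ∈ fab := by rw [hfabe]; simp
  have hγboth : 1 ≤ bothDeg E a b γ :=
    Finset.card_pos.2 ⟨fab, Finset.mem_filter.2 ⟨hfab, hγfab, hafab, hbfab⟩⟩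
  have hγ2 := hD γ hγa hγb
  -- the pair `a`, `b` is good
  have hgab : GoodPair E a b := by
    have hxab : {x, a, b} ∉ E := by
      intro h
      rcases hx.2.2.2.2.2 _ h (by simp) with h' | h'
      · have : y ∈ ({x, a, b} : Finset V) := h' ▸ by simp
        simp only [Finset.mem_insert, Finset.mem_singleton, hxy.symm, hay.symm, false_or] at this
        subst this
        omega
      · have : x' ∈ ({x, a, b} : Finset V) := h' ▸ by simp
        simp only [Finset.mem_insert, Finset.mem_singleton, hxx'.symm, hbx'.symm, false_or,
          or_false] at this
        subst this
        omega
    rcases hE.goodPair_or hax.symm hbx.symm hab hxab with h | h | h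
    · exact absurd rfl (hgx _ h).1
    · exact absurd rfl (hgx _ h).2.1
    · exact h
  obtain ⟨α, β, -, haα, haβ, hbα, hbβ, hαβ, e1, e2, e3, e4, f0,
    h1, h2, h3, h4, h5, hn, m1, m2, m3, m4, m5, m6, m7, m8, m9, m10⟩ := hgab
  simp only [List.nodup_cons, List.mem_cons, List.not_mem_nil, or_false, not_or] at hn
  have hα2 : 2 ≤ hubDeg E a b α :=
    two_le_hubDeg h1 h3 (by tauto) m2 m6 (.inl m1) (.inr m5)
  have hβ2 : 2 ≤ hubDeg E a b β :=
    two_le_hubDeg h2 h4 (by tauto) m4 m8 (.inl m3) (.inr m7)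
  have aα := hadd α
  have aβ := hadd β
  have aγ := hadd γ
  have dα := hdeg' α
  have dβ := hdeg' β
  have dγ := hdeg' γ
  by_cases hf0 : a ∈ f0 ∨ b ∈ f0
  · have hα3 : 3 ≤ hubDeg E a b α := three_le_hubDeg h1 h3 h5 (by tauto) (by tauto) (by tauto)
      m2 m6 m9 (.inl m1) (.inr m5) hf0
    have hβ3 : 3 ≤ hubDeg E a b β := three_le_hubDeg h2 h4 h5 (by tauto) (by tauto) (by tauto)
      m4 m8 m10 (.inl m3) (.inr m7) hf0
    have s2 := slack {α, β} (by simp [haα, haβ]) (by simp [hbα, hbβ])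
    rw [Finset.sum_pair hαβ] at s2
    have hγα : γ ≠ α := by rintro rfl; omega
    have hγβ : γ ≠ β := by rintro rfl; omega
    have s3 := slack {γ, α, β} (by simp [hγa.symm, haα, haβ]) (by simp [hγb.symm, hbα, hbβ])
    rw [Finset.sum_insert (by simp [hγα, hγβ]), Finset.sum_pair hαβ] at s3
    have := sum_offDeg_le hE.1 a b {γ}
    rw [Finset.sum_singleton] at this
    omega
  have hf0off : f0 ∈ offEdges E a b := Finset.mem_filter.2 ⟨h5, hf0⟩
  have hoff1 : (offEdges E a b).card = 1 := le_antisymm hoff (Finset.card_pos.2 ⟨f0, hf0off⟩)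
  have hoffe : ∀ f ∈ E, ¬ (a ∈ f ∨ b ∈ f) → f = f0 := fun f hf hnf =>
    Finset.card_le_one.1 hoff f (Finset.mem_filter.2 ⟨hf, hnf⟩) f0 hf0off
  have htwo : ∀ r, r ≠ a → r ≠ b → pairDeg E a r = 1 ∧ pairDeg E b r = 1 := by
    intro r hra hrb
    have := slack1 r hra hrb
    have := hA r hra hrb
    have := hB r hra hrb
    omega
  have hoff0 : ∀ r, r ∉ f0 → offDeg E a b r = 0 := by
    intro r hr
    rw [offDeg, Finset.card_eq_zero, Finset.filter_eq_empty_iff]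
    rintro f hf ⟨hrf, hnf⟩
    exact hr (hoffe f hf hnf ▸ hrf)
  have tγ := htwo γ hγa hγb
  have tα := htwo α haα.symm hbα.symm
  have tβ := htwo β haβ.symm hbβ.symm
  have hbh : bothDeg E a b γ ≤ hubDeg E a b γ :=
    Finset.card_le_card fun f hf => by
      simp only [Finset.mem_filter] at hf ⊢
      tauto
  have hγf0 : γ ∈ f0 := by
    by_contra h
    have := hoff0 γ h
    omega
  have hγα : γ ≠ α := by rintro rfl; omega
  have hγβ : γ ≠ β := by rintro rfl; omega
  have hf0e := hE.1.eq_triple h5 hγf0 m9 m10 hγα hγβ hαβ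
  have hγfab' : ∀ f ∈ E, γ ∈ f → (a ∈ f ∨ b ∈ f) → f = fab := fun f hf hγf h =>
    Finset.card_le_one.1 (show hubDeg E a b γ ≤ 1 by omega) f
      (Finset.mem_filter.2 ⟨hf, hγf, h⟩) fab (Finset.mem_filter.2 ⟨hfab, hγfab, .inl hafab⟩)
  have hγe : EdgesAt E γ fab f0 := by
    refine ⟨hfab, h5, ?_, hγfab, hγf0, fun k hk hγk => ?_⟩
    · rintro rfl
      exact hf0 (.inl hafab)
    · by_cases h : a ∈ k ∨ b ∈ k
      · exact .inl (hγfab' k hk hγk h)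
      · exact .inr (hoffe k hk h)
  have hgγ : ∀ w, GoodPair E γ w → w ∈ nbr E α ∪ nbr E β := by
    intro w h
    obtain ⟨p, q, -, hq, -, hqγ, -, hqw, -, -, -, g₁, -, g₂, hg₂, k, hk, -, -, -,
      -, -, -, -, -, n3, n4, -⟩ := h.exists_of_edgesAt hγe
    rw [hf0e] at hq
    simp only [Finset.mem_insert, Finset.mem_singleton, hqγ, false_or] at hq
    rw [Finset.mem_union]
    rcases hq with rfl | rfl
    · exact .inl (mem_nbr_of_mem hg₂ n4 n3 hqw.symm)
    · exact .inr (mem_nbr_of_mem hg₂ n4 n3 hqw.symm)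
  have offle : ∀ r, offDeg E a b r ≤ 1 := fun r => by
    refine (Finset.card_le_card fun f hf => ?_).trans hoff
    obtain ⟨h, -, h'⟩ := Finset.mem_filter.1 hf
    exact Finset.mem_filter.2 ⟨h, h'⟩
  have hnα := card_nbr_le hE.1 α
  have hnβ := card_nbr_le hE.1 β
  have oα := offle α
  have oβ := offle β
  obtain ⟨w, hwa, hwb, hw, f, hf, haf, hwf, hall⟩ := exists_edge_avoiding hE.1 hA
    (f0 ∪ (nbr E α ∪ nbr E β)) 1 (fun r _ hra hrb => (htwo r hra hrb).1.le) (by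
      have := Finset.card_union_le f0 (nbr E α ∪ nbr E β)
      have := Finset.card_union_le (nbr E α) (nbr E β)
      have := hE.1 f0 h5
      omega)
  have hdw : ∀ r, r ≠ a → r ≠ b → r ∉ f0 → hdeg E r = 2 ∧ bothDeg E a b r = 0 := by
    intro r hra hrb hr
    have := hoff0 r hr
    have := hD r hra hrb
    have := htwo r hra hrb
    have := hadd r
    have := hdeg' r
    omega
  rw [Finset.mem_union, not_or] at hw
  have hd := hdw w hwa hwb hw.1
  obtain ⟨w', hwa', hww', hfe⟩ := hE.1.exists_third hf haf hwf hwa.symm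
  have hwf' : w' ∈ f := by rw [hfe]; simp
  have hwb' : w' ≠ b := by
    rintro rfl
    have : 1 ≤ bothDeg E a w' w :=
      Finset.card_pos.2 ⟨f, Finset.mem_filter.2 ⟨hf, hwf, haf, hwf'⟩⟩
    omega
  have hw' := hall w' hwf' hwa' hwb'
  rw [Finset.mem_union, not_or] at hw'
  have hd' := hdw w' hwa' hwb' hw'.1
  have hE' : {γ, w, w'} ∉ E := by
    intro h
    rcases hγe.2.2.2.2.2 _ h (by simp) with h' | h'
    · rw [← h'] at hafab
      simp [hγa.symm, hwa.symm, hwa'.symm] at hafab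
    · exact hw.1 (h' ▸ by simp)
  rcases hE.goodPair_or (by rintro rfl; exact hw.1 hγf0) (by rintro rfl; exact hw'.1 hγf0)
    hww'.symm hE' with h | h | h
  · exact hw.2 (hgγ _ h)
  · exact hw'.2 (hgγ _ h)
  · exact not_goodPair_of_mem hd.1 hd'.1 hf hwf hwf' h

theorem GoodPair.exists_mem_of_hdeg_eq_two {E : Finset (Finset V)} {x c : V} {f₁ f₂ : Finset V}
    (h : GoodPair E x c) (hx : EdgesAt E x f₁ f₂) (hc : hdeg E c = 2) {f : Finset V} (hf : f ∈ E)
    (hcf : c ∈ f) : ∃ p ∈ f₁.erase x ∪ f₂.erase x, p ∈ f := by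
  obtain ⟨p, q, hp, hq, hpx, hqx, -, -, -, -, -, g₁, hg₁, g₂, hg₂, k, -, hne, -, -, -, -, -,
    m1, m2, m3, m4, -⟩ := h.exists_of_edgesAt hx
  rcases (edgesAt_of_mem_of_mem hc hg₁ m1 hg₂ m3 hne).2.2.2.2.2 f hf hcf with rfl | rfl
  · exact ⟨p, by simp [hp, hpx], m2⟩
  · exact ⟨q, by simp [hq, hqx], m4⟩

theorem GoodPair.exists_mem_insert_of_hdeg_eq_two {E : Finset (Finset V)} {x y a c : V}
    {g : Finset V} (h : GoodPair E x c) (hx : EdgesAt E x {x, y, a} g) (hy : hdeg E y = 2)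
    (hc : hdeg E c = 2) {f : Finset V} (hf : f ∈ E) (hcf : c ∈ f) :
    ∃ p ∈ insert a (g.erase x), p ∈ f := by
  obtain ⟨-, -, q, hq, hqx, -, -, -, g₁, hg₁, g₂, hg₂, k, -, hne, -, -, m1, m2, m3, m4, -⟩ :=
    h.exists_of_edgesAt_triple hx hy
  rcases (edgesAt_of_mem_of_mem hc hg₁ m1 hg₂ m3 hne).2.2.2.2.2 f hf hcf with rfl | rfl
  · exact ⟨a, by simp, m2⟩
  · exact ⟨q, by simp [hq, hqx], m4⟩

/-- The degree-two vertices of a hyperedge. -/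
def deg2In [Fintype V] (E : Finset (Finset V)) (f : Finset V) : Finset V :=
  (deg2 E).filter fun v => v ∈ f

theorem mem_deg2In [Fintype V] {E : Finset (Finset V)} {f : Finset V} {v : V} :
    v ∈ deg2In E f ↔ hdeg E v = 2 ∧ v ∈ f := by
  rw [deg2In, Finset.mem_filter, mem_deg2]

theorem sum_card_deg2In [Fintype V] (E : Finset (Finset V)) :
    ∑ f ∈ E, (deg2In E f).card = 2 * (deg2 E).card := by
  unfold deg2In
  rw [← sum_card_filter_mem, mul_comm, ← smul_eq_mul, ← Finset.sum_const]
  exact Finset.sum_congr rfl fun v hv => mem_deg2.1 hv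

theorem IsSaturated.card_deg2In_le [Fintype V] {E : Finset (Finset V)} (hE : IsSaturated E)
    (hV : 7 ≤ Fintype.card V) {f : Finset V} (hf : f ∈ E) : (deg2In E f).card ≤ 2 := by
  by_contra! h
  obtain ⟨x, y, z, hx, hy, hz, hxy, hxz, hyz⟩ := Finset.two_lt_card_iff.1 h
  rw [mem_deg2In] at hx hy hz
  have := hE.three_le_hdeg_of_deg2 hV hf hx.2 hy.2 hz.2 hx.1 hy.1 hxy hxz.symm hyz.symm
  omega

/-- The hyperedges with exactly one degree-two vertex. -/
def singleEdges [Fintype V] (E : Finset (Finset V)) : Finset (Finset V) :=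
  E.filter fun f => (deg2In E f).card = 1

theorem IsSaturated.card_singleEdges_le [Fintype V] {E : Finset (Finset V)} (hE : IsSaturated E)
    (hV : 7 ≤ Fintype.card V) (hexc : excess E ≤ (deg2 E).card) {x y : V} (hx : hdeg E x = 2)
    (hy : hdeg E y = 2) (H : Finset V)
    (hH : ∀ c, hdeg E c = 2 → c ≠ x → c ≠ y → ∀ f ∈ E, c ∈ f → ∃ h ∈ H, h ∈ f) :
    (singleEdges E).card ≤ 6 * H.card + 8 := by
  set T := E.filter fun f => 0 < (deg2In E f).card with hT
  have hcount : 2 * T.card = (singleEdges E).card + 2 * (deg2 E).card := by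
    rw [← sum_card_deg2In, hT, singleEdges, Finset.card_filter, Finset.card_filter,
      Finset.mul_sum, ← Finset.sum_add_distrib]
    refine Finset.sum_congr rfl fun f hf => ?_
    have := hE.card_deg2In_le hV hf
    split_ifs <;> omega
  have hsub : T ⊆ ((E.filter fun f => x ∈ f) ∪ (E.filter fun f => y ∈ f)) ∪
      H.biUnion fun h => E.filter fun f => h ∈ f := by
    intro f hf
    obtain ⟨hfE, hpos⟩ := Finset.mem_filter.1 hf
    obtain ⟨c, hc⟩ := Finset.card_pos.1 hpos
    obtain ⟨hc2, hcf⟩ := mem_deg2In.1 hc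
    simp only [Finset.mem_union, Finset.mem_filter, Finset.mem_biUnion]
    by_cases hcx : c = x
    · exact .inl (.inl ⟨hfE, hcx ▸ hcf⟩)
    by_cases hcy : c = y
    · exact .inl (.inr ⟨hfE, hcy ▸ hcf⟩)
    obtain ⟨h, hh, hhf⟩ := hH c hc2 hcx hcy f hfE hcf
    exact .inr ⟨h, hh, hfE, hhf⟩
  have h1 := Finset.card_le_card hsub
  have h2 := Finset.card_union_le ((E.filter fun f => x ∈ f) ∪ (E.filter fun f => y ∈ f))
    (H.biUnion fun h => E.filter fun f => h ∈ f)
  have h3 := Finset.card_union_le (E.filter fun f => x ∈ f) (E.filter fun f => y ∈ f)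
  have h4 : (H.biUnion fun h => E.filter fun f => h ∈ f).card ≤ ∑ h ∈ H, hdeg E h :=
    Finset.card_biUnion_le
  have h5 := sum_hdeg_le E H
  unfold hdeg at hx hy h4 h5
  omega

theorem IsSaturated.card_le_of_forall_eq [Fintype V] {E : Finset (Finset V)} (hE : IsSaturated E)
    (hV : 96 ≤ Fintype.card V)
    (hno : ∀ f ∈ E, ∀ x ∈ f, ∀ y ∈ f, hdeg E x = 2 → hdeg E y = 2 → x = y) :
    Fintype.card V ≤ E.card := by
  by_contra! hlt
  have hexc := excess_le hE (by omega) hlt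
  have hlow := hE.lt_excess hV
  obtain ⟨x, y, hx, hy, hxy, hgood⟩ : ∃ x y, hdeg E x = 2 ∧ hdeg E y = 2 ∧ x ≠ y ∧
      ∀ c, hdeg E c = 2 → c ≠ x → c ≠ y → GoodPair E x c ∨ GoodPair E y c := by
    by_cases h : ∃ x y, hdeg E x = 2 ∧ hdeg E y = 2 ∧ x ≠ y ∧ ¬ GoodPair E x y
    · obtain ⟨x, y, hx, hy, hxy, hn⟩ := h
      refine ⟨x, y, hx, hy, hxy, fun c _ hcx hcy => ?_⟩
      refine (hE.goodPair_or hxy hcx.symm hcy.symm fun h => ?_).resolve_left hn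
      exact hxy (hno _ h x (by simp) y (by simp) hx hy)
    · obtain ⟨x, hx, y, hy, hxy⟩ := Finset.one_lt_card.1 (show 1 < (deg2 E).card by omega)
      rw [mem_deg2] at hx hy
      refine ⟨x, y, hx, hy, hxy, fun c hc hcx _ => .inl ?_⟩
      by_contra hn
      exact h ⟨x, c, hx, hc, hcx.symm, hn⟩
  obtain ⟨f₁, f₂, hfx⟩ := exists_edgesAt hx
  obtain ⟨g₁, g₂, hgy⟩ := exists_edgesAt hy
  have h1 := hE.card_singleEdges_le (by omega) hexc hx hy
    ((f₁.erase x ∪ f₂.erase x) ∪ (g₁.erase y ∪ g₂.erase y)) (by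
      intro c hc hcx hcy f hf hcf
      rcases hgood c hc hcx hcy with h | h
      · obtain ⟨p, hp, hpf⟩ := h.exists_mem_of_hdeg_eq_two hfx hc hf hcf
        exact ⟨p, Finset.mem_union_left _ hp, hpf⟩
      · obtain ⟨p, hp, hpf⟩ := h.exists_mem_of_hdeg_eq_two hgy hc hf hcf
        exact ⟨p, Finset.mem_union_right _ hp, hpf⟩)
  have hcard : ∀ {z : V} {f g : Finset V}, EdgesAt E z f g → (f.erase z ∪ g.erase z).card ≤ 4 := by
    intro z f g h
    refine (Finset.card_union_le _ _).trans ?_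
    rw [Finset.card_erase_of_mem h.2.2.2.1, Finset.card_erase_of_mem h.2.2.2.2.1,
      hE.1 f h.1, hE.1 g h.2.1]
  have h2 := Finset.card_union_le (f₁.erase x ∪ f₂.erase x) (g₁.erase y ∪ g₂.erase y)
  have h3 := hcard hfx
  have h4 := hcard hgy
  have h5 : 2 * (deg2 E).card ≤ (singleEdges E).card := by
    rw [← sum_card_deg2In, singleEdges, Finset.card_filter]
    refine Finset.sum_le_sum fun f hf => ?_
    have : (deg2In E f).card ≤ 1 := Finset.card_le_one.2 fun u hu v hv =>
      hno f hf u (mem_deg2In.1 hu).2 v (mem_deg2In.1 hv).2 (mem_deg2In.1 hu).1 (mem_deg2In.1 hv).1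
    split_ifs <;> omega
  omega

/-- At most one degree-two vertex lies in no hyperedge with a single degree-two vertex. -/
theorem IsSaturated.card_deg2_le [Fintype V] {E : Finset (Finset V)} (hE : IsSaturated E)
    (hV : 96 ≤ Fintype.card V) (hlt : E.card < Fintype.card V) :
    (deg2 E).card ≤ (singleEdges E).card + 1 := by
  set S := (singleEdges E).biUnion fun f => deg2In E f with hS
  have hSc : S.card ≤ (singleEdges E).card * 1 :=
    Finset.card_biUnion_le_card_mul _ _ 1 fun f hf => (Finset.mem_filter.1 hf).2.le
  have key : (deg2 E \ S).card ≤ 1 := by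
    rw [Finset.card_le_one]
    have hdouble : ∀ u ∈ deg2 E \ S, ∀ f ∈ E, u ∈ f →
        ∃ w a, hdeg E w = 2 ∧ w ≠ u ∧ a ≠ u ∧ a ≠ w ∧ 3 ≤ hdeg E a ∧ f = {u, w, a} := by
      intro u hu f hf huf
      obtain ⟨hu2, huS⟩ := Finset.mem_sdiff.1 hu
      rw [mem_deg2] at hu2
      have humem : u ∈ deg2In E f := mem_deg2In.2 ⟨hu2, huf⟩
      have h1 : (deg2In E f).card ≠ 1 := fun h => huS <| Finset.mem_biUnion.2
        ⟨f, Finset.mem_filter.2 ⟨hf, h⟩, humem⟩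
      have h2 := Finset.card_pos.2 ⟨u, humem⟩
      obtain ⟨w, hw, hwu⟩ := Finset.exists_mem_ne (show 1 < (deg2In E f).card by omega) u
      obtain ⟨hw2, hwf⟩ := mem_deg2In.1 hw
      obtain ⟨a, hau, haw, hfe⟩ := hE.1.exists_third hf huf hwf hwu.symm
      exact ⟨w, a, hw2, hwu, hau, haw, hE.three_le_hdeg_of_deg2 (by omega) hf huf hwf
        (by simp [hfe]) hu2 hw2 hwu.symm hau haw, hfe⟩
    intro u hu v hv
    by_contra huv
    have hu2 := mem_deg2.1 (Finset.mem_sdiff.1 hu).1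
    have hv2 := mem_deg2.1 (Finset.mem_sdiff.1 hv).1
    have hbad : ∀ c, ¬ GoodPair E u c := by
      intro c hc
      obtain ⟨f, g, hfg⟩ := exists_edgesAt hu2
      obtain ⟨w, a, hw2, hwu, hau, haw, ha3, rfl⟩ := hdouble u hu f hfg.1 hfg.2.2.2.1
      obtain ⟨w', b, hw2', hwu', hbu, hbw, hb3, rfl⟩ := hdouble u hu g hfg.2.1 hfg.2.2.2.2.1
      by_cases hab : a = b
      · obtain ⟨-, -, q, hq, hqu, -, hqa, hq3, -⟩ := hc.exists_of_edgesAt_triple hfg hw2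
        simp only [Finset.mem_insert, Finset.mem_singleton, hqu, ← hab, hqa, false_or,
          or_false] at hq
        subst hq
        omega
      · have := hE.card_le_of_double hV hfg hw2 hw2' hwu.symm hwu'.symm hau haw hbu hbw hab
        omega
    have hmem : ∀ f ∈ E, v ∈ f → u ∈ f := by
      intro f hf hvf
      by_contra huf
      obtain ⟨w, a, hw2, hwv, hav, haw, -, rfl⟩ := hdouble v hv f hf hvf
      have huw : u ≠ w := by rintro rfl; simp at huf
      by_cases h : {u, v, w} ∈ E
      · have := hE.three_le_hdeg_of_deg2 (by omega) h (x := u) (y := v) (z := w) (by simp)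
          (by simp) (by simp) hu2 hv2 huv huw.symm hwv
        omega
      · rcases hE.goodPair_or huv huw hwv.symm h with h | h | h
        · exact hbad _ h
        · exact hbad _ h
        · exact not_goodPair_of_mem hv2 hw2 hf hvf (by simp) h
    obtain ⟨f, g, hfg⟩ := exists_edgesAt hv2
    obtain ⟨a, hav, hau, rfl⟩ := hE.1.exists_third hfg.1 hfg.2.2.2.1
      (hmem f hfg.1 hfg.2.2.2.1) (Ne.symm huv)
    obtain ⟨b, hbv, hbu, rfl⟩ := hE.1.exists_third hfg.2.1 hfg.2.2.2.2.1
      (hmem g hfg.2.1 hfg.2.2.2.2.1) (Ne.symm huv)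
    have hab : a ≠ b := by
      rintro rfl
      exact hfg.2.2.1 rfl
    have := hE.card_le_of_double hV hfg hu2 hu2 (Ne.symm huv) (Ne.symm huv) hav hau hbv hbu hab
    omega
  have := Finset.card_le_card_sdiff_add_card (s := deg2 E) (t := S)
  omega

theorem IsSaturated.card_le [Fintype V] {E : Finset (Finset V)} (hE : IsSaturated E)
    (hV : 96 ≤ Fintype.card V) : Fintype.card V ≤ E.card := by
  by_cases hno : ∀ f ∈ E, ∀ x ∈ f, ∀ y ∈ f, hdeg E x = 2 → hdeg E y = 2 → x = y
  · exact hE.card_le_of_forall_eq hV hno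
  push Not at hno
  obtain ⟨f, hf, x, hxf, y, hyf, hx, hy, hxy⟩ := hno
  obtain ⟨a, hax, hay, rfl⟩ := hE.1.exists_third hf hxf hyf hxy
  by_contra! hlt
  have hexc := excess_le hE (by omega) hlt
  obtain ⟨g, hg⟩ := edgesAt_of_mem hx hf hxf
  obtain ⟨g', hg'⟩ := edgesAt_of_mem hy hf hyf
  have hpair : ({x, y, a} : Finset V) = {y, x, a} := Finset.insert_comm x y {a}
  have hgood : ∀ c, c ≠ x → c ≠ y → c ≠ a → GoodPair E x c ∨ GoodPair E y c := by
    intro c hcx hcy hca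
    refine hE.goodPair_or_of_deg2 hx hy hxy hf hxf hyf hcx hcy fun h => ?_
    have hne : ({x, y, a} : Finset V) ≠ {x, y, c} := fun h' => by
      have : c ∈ ({x, y, a} : Finset V) := h' ▸ (by simp)
      simp [hcx, hcy, hca] at this
    have := hE.card_le_of_double hV (edgesAt_of_mem_of_mem hx hf hxf h (by simp) hne) hy hy hxy hxy
      hax hay hcx hcy hca.symm
    omega
  have hdega : Fintype.card V ≤ hdeg E a * 2 + 1 := by
    have hsub : (Finset.univ : Finset V) ⊆ insert a (nbr E a) := by
      intro c _
      by_cases hca : c = a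
      · simp [hca]
      refine Finset.mem_insert_of_mem ?_
      by_cases hcx : c = x
      · exact mem_nbr_of_mem hf (by simp) (by simp [hcx]) hca
      by_cases hcy : c = y
      · exact mem_nbr_of_mem hf (by simp) (by simp [hcy]) hca
      rcases hgood c hcx hcy hca with h | h
      · obtain ⟨-, -, q, -, -, -, -, -, g₁, hg₁, g₂, -, k, -, -, -, -, m1, m2, -⟩ :=
          h.exists_of_edgesAt_triple hg hy
        exact mem_nbr_of_mem hg₁ m2 m1 hca
      · obtain ⟨-, -, q, -, -, -, -, -, g₁, hg₁, g₂, -, k, -, -, -, -, m1, m2, -⟩ :=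
          h.exists_of_edgesAt_triple (hpair ▸ hg') hx
        exact mem_nbr_of_mem hg₁ m2 m1 hca
    have h1 := Finset.card_le_card hsub
    have h2 := Finset.card_insert_le a (nbr E a)
    have h3 := card_nbr_le hE.1 a
    rw [Finset.card_univ] at h1
    omega
  have hexca : hdeg E a - 3 ≤ excess E :=
    Finset.single_le_sum (f := fun v => hdeg E v - 3) (fun _ _ => Nat.zero_le _)
      (Finset.mem_univ a)
  have ha3 : 3 ≤ hdeg E a := by omega
  have h1 := hE.card_singleEdges_le (by omega) hexc hx hy
    (insert a (g.erase x ∪ g'.erase y)) (by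
      intro c hc hcx hcy f hf hcf
      have hca : c ≠ a := by rintro rfl; omega
      rcases hgood c hcx hcy hca with h | h
      · obtain ⟨p, hp, hpf⟩ := h.exists_mem_insert_of_hdeg_eq_two hg hy hc hf hcf
        exact ⟨p, Finset.insert_subset_insert a Finset.subset_union_left hp, hpf⟩
      · obtain ⟨p, hp, hpf⟩ :=
          h.exists_mem_insert_of_hdeg_eq_two (hpair ▸ hg') hx hc hf hcf
        exact ⟨p, Finset.insert_subset_insert a Finset.subset_union_right hp, hpf⟩)
  have h2 := Finset.card_insert_le a (g.erase x ∪ g'.erase y)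
  have h3 := Finset.card_union_le (g.erase x) (g'.erase y)
  rw [Finset.card_erase_of_mem hg.2.2.2.2.1, Finset.card_erase_of_mem hg'.2.2.2.2.1,
    hE.1 g hg.2.1, hE.1 g' hg'.2.1] at h3
  have h4 := hE.card_deg2_le hV hlt
  omega

theorem GoodPair.isBergeK4_insert {E : Finset (Finset V)} {u v : V} (h : GoodPair E u v)
    {e : Finset V} (hu : u ∈ e) (hv : v ∈ e) (he : e ∉ E) : IsBergeK4 (insert e E) := by
  obtain ⟨x, y, huv, hux, huy, hvx, hvy, hxy, eux, euy, evx, evy, exy,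
    h1, h2, h3, h4, h5, hn, m1, m2, m3, m4, m5, m6, m7, m8, m9, m10⟩ := h
  refine ⟨u, v, x, y, huv, hux, huy, hvx, hvy, hxy, e, eux, euy, evx, evy, exy, ?_⟩
  have hne : ∀ f ∈ E, e ≠ f := fun f hf h => he (h ▸ hf)
  refine ⟨by simp, by simp [h1], by simp [h2], by simp [h3], by simp [h4], by simp [h5], ?_,
    hu, hv, m1, m2, m3, m4, m5, m6, m7, m8, m9, m10⟩
  rw [List.nodup_cons]
  refine ⟨?_, hn⟩
  simp [hne _ h1, hne _ h2, hne _ h3, hne _ h4, hne _ h5]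

theorem IsBergeK4Core.three_le_hdeg {E : Finset (Finset V)} {a b c d : V}
    (h : IsBergeK4Core E a b c d) :
    3 ≤ hdeg E a ∧ 3 ≤ hdeg E b ∧ 3 ≤ hdeg E c ∧ 3 ≤ hdeg E d := by
  obtain ⟨hab, hac, had, hbc, hbd, hcd, fab, fac, fad, fbc, fbd, fcd,
    h1, h2, h3, h4, h5, h6, hn, m1, m2, m3, m4, m5, m6, m7, m8, m9, m10, m11, m12⟩ := h
  simp only [List.nodup_cons, List.mem_cons, List.not_mem_nil, or_false, not_or] at hn
  exact ⟨_root_.three_le_hdeg h1 h2 h3 (by tauto) (by tauto) (by tauto) m1 m3 m5,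
    _root_.three_le_hdeg h1 h4 h5 (by tauto) (by tauto) (by tauto) m2 m7 m9,
    _root_.three_le_hdeg h2 h4 h6 (by tauto) (by tauto) (by tauto) m4 m8 m11,
    _root_.three_le_hdeg h3 h5 h6 (by tauto) (by tauto) (by tauto) m6 m10 m12⟩

/-- Three distinct hyperedges, one on each pair of `a`, `b` and `c`. -/
def BergeTriangle (E : Finset (Finset V)) (a b c : V) : Prop :=
  ∃ f ∈ E, ∃ g ∈ E, ∃ h ∈ E, f ≠ g ∧ f ≠ h ∧ g ≠ h ∧
    a ∈ f ∧ b ∈ f ∧ a ∈ g ∧ c ∈ g ∧ b ∈ h ∧ c ∈ h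

/-- A good pair forming a triangle with every further vertex. -/
def HubPair (E : Finset (Finset V)) (a b : V) : Prop :=
  GoodPair E a b ∧ (∃ f ∈ E, a ∈ f ∧ b ∈ f) ∧ ∀ c, c ≠ a → c ≠ b → BergeTriangle E a b c

section Gadget

variable {W : Type*} [DecidableEq W]

theorem GoodPair.map {E : Finset (Finset V)} {E' : Finset (Finset W)} {u v : V} (φ : V ↪ W)
    (h : GoodPair E u v) (hE : ∀ f ∈ E, f.map φ ∈ E') : GoodPair E' (φ u) (φ v) := by
  obtain ⟨x, y, huv, hux, huy, hvx, hvy, hxy, eux, euy, evx, evy, exy,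
    h1, h2, h3, h4, h5, hn, m1, m2, m3, m4, m5, m6, m7, m8, m9, m10⟩ := h
  refine ⟨φ x, φ y, by simpa, by simpa, by simpa, by simpa, by simpa, by simpa,
    eux.map φ, euy.map φ, evx.map φ, evy.map φ, exy.map φ, hE _ h1, hE _ h2, hE _ h3, hE _ h4,
    hE _ h5, hn.map (Finset.map_injective φ), ?_⟩
  simp_all

theorem BergeTriangle.map {E : Finset (Finset V)} {E' : Finset (Finset W)} {a b c : V} (φ : V ↪ W)
    (h : BergeTriangle E a b c) (hE : ∀ f ∈ E, f.map φ ∈ E') :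
    BergeTriangle E' (φ a) (φ b) (φ c) := by
  obtain ⟨f, hf, g, hg, k, hk, h1, h2, h3, m⟩ := h
  refine ⟨f.map φ, hE f hf, g.map φ, hE g hg, k.map φ, hE k hk,
    (Finset.map_injective φ).ne h1, (Finset.map_injective φ).ne h2,
    (Finset.map_injective φ).ne h3, ?_⟩
  simpa using m

/-- The hypergraph `E`, transported along `φ`, with a two-edge gadget on the new vertices `x`, `y`
attached at `a` and `b`. -/
def addGadget (E : Finset (Finset V)) (φ : V ↪ W) (x y : W) (a b : V) : Finset (Finset W) :=
  insert {x, y, φ a} (insert {x, y, φ b} (E.image fun f => f.map φ))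

theorem mem_addGadget {E : Finset (Finset V)} {φ : V ↪ W} {x y : W} {a b : V} {e : Finset W} :
    e ∈ addGadget E φ x y a b ↔
      e = {x, y, φ a} ∨ e = {x, y, φ b} ∨ ∃ f ∈ E, f.map φ = e := by
  simp [addGadget]

theorem exists_map_eq_of_mem_addGadget {E : Finset (Finset V)} {φ : V ↪ W} {x y : W} {a b : V}
    (hx : ∀ v, φ v ≠ x) (hy : ∀ v, φ v ≠ y) {e : Finset W} (he : e ∈ addGadget E φ x y a b)
    {u v : V} (huv : u ≠ v) (hu : φ u ∈ e) (hv : φ v ∈ e) :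
    ∃ f ∈ E, f.map φ = e ∧ u ∈ f ∧ v ∈ f := by
  rcases mem_addGadget.1 he with rfl | rfl | ⟨f, hf, rfl⟩
  · simp [hx, hy] at hu hv
    exact absurd (hu.trans hv.symm) huv
  · simp [hx, hy] at hu hv
    exact absurd (hu.trans hv.symm) huv
  · exact ⟨f, hf, rfl, by simpa using hu, by simpa using hv⟩

theorem hdeg_addGadget_le {E : Finset (Finset V)} {φ : V ↪ W} {x y z : W} {a b : V}
    (hz : ∀ v, φ v ≠ z) : hdeg (addGadget E φ x y a b) z ≤ 2 := by
  have hsub : ((addGadget E φ x y a b).filter fun e => z ∈ e) ⊆ {{x, y, φ a}, {x, y, φ b}} := by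
    intro e he
    obtain ⟨he, hze⟩ := Finset.mem_filter.1 he
    rcases mem_addGadget.1 he with rfl | rfl | ⟨f, hf, rfl⟩
    · simp
    · simp
    · obtain ⟨v, -, hv⟩ := Finset.mem_map.1 hze
      exact absurd hv (hz v)
  exact (Finset.card_le_card hsub).trans Finset.card_le_two

theorem not_isBergeK4_addGadget {E : Finset (Finset V)} (hE : ¬ IsBergeK4 E) {φ : V ↪ W} {x y : W}
    {a b : V} (hx : ∀ v, φ v ≠ x) (hy : ∀ v, φ v ≠ y) (hW : ∀ w, w = x ∨ w = y ∨ ∃ v, φ v = w) :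
    ¬ IsBergeK4 (addGadget E φ x y a b) := by
  rintro ⟨p, q, r, s, h⟩
  have hold : ∀ w, 3 ≤ hdeg (addGadget E φ x y a b) w → ∃ v, φ v = w := by
    intro w hw
    rcases hW w with rfl | rfl | h
    · have := hdeg_addGadget_le (E := E) (x := w) (y := y) (a := a) (b := b) hx
      omega
    · have := hdeg_addGadget_le (E := E) (x := x) (y := w) (a := a) (b := b) hy
      omega
    · exact h
  obtain ⟨hp, hq, hr, hs⟩ := h.three_le_hdeg
  obtain ⟨p, rfl⟩ := hold p hp
  obtain ⟨q, rfl⟩ := hold q hq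
  obtain ⟨r, rfl⟩ := hold r hr
  obtain ⟨s, rfl⟩ := hold s hs
  obtain ⟨hpq, hpr, hps, hqr, hqs, hrs, e1, e2, e3, e4, e5, e6,
    h1, h2, h3, h4, h5, h6, hn, m1, m2, m3, m4, m5, m6, m7, m8, m9, m10, m11, m12⟩ := h
  rw [φ.injective.ne_iff] at hpq hpr hps hqr hqs hrs
  obtain ⟨f1, k1, rfl, n1, n2⟩ := exists_map_eq_of_mem_addGadget hx hy h1 hpq m1 m2
  obtain ⟨f2, k2, rfl, n3, n4⟩ := exists_map_eq_of_mem_addGadget hx hy h2 hpr m3 m4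
  obtain ⟨f3, k3, rfl, n5, n6⟩ := exists_map_eq_of_mem_addGadget hx hy h3 hps m5 m6
  obtain ⟨f4, k4, rfl, n7, n8⟩ := exists_map_eq_of_mem_addGadget hx hy h4 hqr m7 m8
  obtain ⟨f5, k5, rfl, n9, n10⟩ := exists_map_eq_of_mem_addGadget hx hy h5 hqs m9 m10
  obtain ⟨f6, k6, rfl, n11, n12⟩ := exists_map_eq_of_mem_addGadget hx hy h6 hrs m11 m12
  exact hE ⟨p, q, r, s, hpq, hpr, hps, hqr, hqs, hrs, f1, f2, f3, f4, f5, f6,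
    k1, k2, k3, k4, k5, k6, List.Nodup.of_map (l := [f1, f2, f3, f4, f5, f6]) (Finset.map φ) hn,
    n1, n2, n3, n4, n5, n6, n7, n8, n9, n10, n11, n12⟩

theorem BergeTriangle.goodPair {E : Finset (Finset W)} {a b c z : W} (h : BergeTriangle E a b c)
    (hab : a ≠ b) (hca : c ≠ a) (hcb : c ≠ b) (hza : z ≠ a) (hzb : z ≠ b) (hzc : z ≠ c)
    {t₁ t₂ : Finset W} (ht₁ : t₁ ∈ E) (ht₂ : t₂ ∈ E) (hne : t₁ ≠ t₂) (hz₁ : z ∈ t₁) (ha : a ∈ t₁)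
    (hz₂ : z ∈ t₂) (hb : b ∈ t₂) (hb₁ : b ∉ t₁) (hc₁ : c ∉ t₁) (ha₂ : a ∉ t₂) (hc₂ : c ∉ t₂) :
    GoodPair E z c := by
  obtain ⟨f, hf, g, hg, k, hk, h1, h2, h3, m1, m2, m3, m4, m5, m6⟩ := h
  refine ⟨a, b, hzc, hza, hzb, hca, hcb, hab, t₁, t₂, g, k, f, ht₁, ht₂, hg, hk, hf, ?_,
    hz₁, ha, hz₂, hb, m4, m3, m6, m5, m1, m2⟩
  grind

theorem IsSaturated.isSaturated_addGadget [Fintype V] [Fintype W] {E : Finset (Finset V)} (hE : IsSaturated E)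
    {φ : V ↪ W} {x y : W} {a b : V} (hx : ∀ v, φ v ≠ x) (hy : ∀ v, φ v ≠ y) (hxy : x ≠ y)
    (hW : ∀ w, w = x ∨ w = y ∨ ∃ v, φ v = w) (hab : HubPair E a b) :
    IsSaturated (addGadget E φ x y a b) ∧ (addGadget E φ x y a b).card = E.card + 2 ∧
      HubPair (addGadget E φ x y a b) (φ a) (φ b) := by
  set E' := addGadget E φ x y a b with hE'
  obtain ⟨hgood, ⟨f₀, hf₀, haf₀, hbf₀⟩, htri⟩ := hab
  have hne : φ a ≠ φ b := φ.injective.ne hgood.ne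
  have ht₁ : {x, y, φ a} ∈ E' := mem_addGadget.2 (.inl rfl)
  have ht₂ : {x, y, φ b} ∈ E' := mem_addGadget.2 (.inr (.inl rfl))
  have hold : ∀ f ∈ E, f.map φ ∈ E' := fun f hf => mem_addGadget.2 (.inr (.inr ⟨f, hf, rfl⟩))
  have htne : ({x, y, φ a} : Finset W) ≠ {x, y, φ b} := by
    intro h
    have : φ a ∈ ({x, y, φ b} : Finset W) := h ▸ (by simp)
    simp [hx, hy, hgood.ne] at this
  have hxold : ∀ f : Finset V, x ∉ f.map φ := fun f => by simp [hx]
  refine ⟨⟨?_, not_isBergeK4_addGadget hE.2.1 hx hy hW, ?_⟩, ?_, hgood.map φ hold,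
    ⟨f₀.map φ, hold f₀ hf₀, by simpa, by simpa⟩, ?_⟩
  · intro e he
    rcases mem_addGadget.1 he with rfl | rfl | ⟨f, hf, rfl⟩
    · exact Finset.card_eq_three.2 ⟨x, y, φ a, hxy, (hx a).symm, (hy a).symm, rfl⟩
    · exact Finset.card_eq_three.2 ⟨x, y, φ b, hxy, (hx b).symm, (hy b).symm, rfl⟩
    · rw [Finset.card_map, hE.1 f hf]
  · intro e he heE
    suffices ∃ u ∈ e, ∃ v ∈ e, GoodPair E' u v by
      obtain ⟨u, hu, v, hv, h⟩ := this
      exact h.isBergeK4_insert hu hv heE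
    by_cases hnew : ∀ w ∈ e, ∃ v, φ v = w
    · obtain ⟨f, rfl⟩ : ∃ f : Finset V, f.map φ = e := by
        refine ⟨Finset.univ.filter fun v => φ v ∈ e, ?_⟩
        ext w
        simp only [Finset.mem_map, Finset.mem_filter, Finset.mem_univ, true_and]
        constructor
        · rintro ⟨v, hv, rfl⟩
          exact hv
        · intro hw
          obtain ⟨v, rfl⟩ := hnew w hw
          exact ⟨v, hw, rfl⟩
      obtain ⟨u, hu, v, hv, h⟩ := hE.exists_goodPair (by simpa using he) fun hf => heE (hold f hf)
      exact ⟨φ u, by simpa, φ v, by simpa, h.map φ hold⟩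
    · push Not at hnew
      obtain ⟨z, hze, hz⟩ := hnew
      have hzxy : z = x ∨ z = y := by
        rcases hW z with h | h | ⟨v, h⟩
        · exact .inl h
        · exact .inr h
        · exact absurd h (hz v)
      have hzt : ∀ w, z ∈ ({x, y, w} : Finset W) := fun w => by
        rcases hzxy with rfl | rfl <;> simp
      by_cases hc : ∃ c, c ≠ a ∧ c ≠ b ∧ φ c ∈ e
      · obtain ⟨c, hca, hcb, hce⟩ := hc
        refine ⟨z, hze, φ c, hce, ((htri c hca hcb).map φ hold).goodPair hne (by simpa) (by simpa)
          (hz a).symm (hz b).symm (hz c).symm ht₁ ht₂ htne (hzt _) (by simp) (hzt _) (by simp)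
          ?_ ?_ ?_ ?_⟩ <;> simp [hx, hy, hca, hcb, hgood.ne, hgood.ne.symm]
      · push Not at hc
        have hsub : ∀ w ∈ e, w = x ∨ w = y ∨ w = φ a ∨ w = φ b := by
          intro w hw
          rcases hW w with h | h | ⟨v, rfl⟩
          · exact .inl h
          · exact .inr (.inl h)
          · by_cases hva : v = a
            · exact .inr (.inr (.inl (by rw [hva])))
            by_cases hvb : v = b
            · exact .inr (.inr (.inr (by rw [hvb])))
            exact absurd hw (hc v hva hvb)
        refine ⟨φ a, ?_, φ b, ?_, hgood.map φ hold⟩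
        · by_contra h
          have : e = {x, y, φ b} := Finset.eq_of_subset_of_card_le (fun w hw => by
            have := hsub w hw
            have : w ≠ φ a := by rintro rfl; exact h hw
            simp only [Finset.mem_insert, Finset.mem_singleton]
            tauto) (Finset.card_le_three.trans he.ge)
          exact heE (this ▸ ht₂)
        · by_contra h
          have : e = {x, y, φ a} := Finset.eq_of_subset_of_card_le (fun w hw => by
            have := hsub w hw
            have : w ≠ φ b := by rintro rfl; exact h hw
            simp only [Finset.mem_insert, Finset.mem_singleton]
            tauto) (Finset.card_le_three.trans he.ge)
          exact heE (this ▸ ht₁)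
  · have hxmem : ∀ w, {x, y, w} ∉ E.image fun f => f.map φ := by
      intro w hw
      obtain ⟨f, -, hf⟩ := Finset.mem_image.1 hw
      exact hxold f (hf ▸ by simp)
    rw [hE', addGadget, Finset.card_insert_of_notMem, Finset.card_insert_of_notMem (hxmem _),
      Finset.card_image_of_injective _ (Finset.map_injective φ)]
    rw [Finset.mem_insert, not_or]
    exact ⟨htne, hxmem _⟩
  · have htriz : ∀ z, (∀ v, φ v ≠ z) → z ∈ ({x, y, φ a} : Finset W) →
        z ∈ ({x, y, φ b} : Finset W) → BergeTriangle E' (φ a) (φ b) z := by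
      intro z hz hz₁ hz₂
      refine ⟨f₀.map φ, hold f₀ hf₀, _, ht₁, _, ht₂, ?_, ?_, htne, by simpa, by simpa,
        by simp, hz₁, by simp, hz₂⟩
      · exact fun h => hxold f₀ (h ▸ by simp)
      · exact fun h => hxold f₀ (h ▸ by simp)
    intro c hca hcb
    rcases hW c with rfl | rfl | ⟨v, rfl⟩
    · exact htriz c hx (by simp) (by simp)
    · exact htriz c hy (by simp) (by simp)
    · exact (htri v (by rintro rfl; exact hca rfl) (by rintro rfl; exact hcb rfl)).map φ hold

end Gadget

theorem IsBergeK4Core.six_le_card {E : Finset (Finset V)} {a b c d : V}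
    (h : IsBergeK4Core E a b c d) : 6 ≤ E.card := by
  obtain ⟨-, -, -, -, -, -, fab, fac, fad, fbc, fbd, fcd, h1, h2, h3, h4, h5, h6, hn, -⟩ := h
  have := List.toFinset_card_of_nodup hn
  rw [List.length_cons] at this
  refine this.ge.trans (Finset.card_le_card fun f hf => ?_)
  simp only [List.mem_toFinset, List.mem_cons, List.not_mem_nil, or_false] at hf
  rcases hf with rfl | rfl | rfl | rfl | rfl | rfl <;> assumption

/-- In a hypergraph with six hyperedges, a Berge-K4 uses every hyperedge. -/
theorem IsBergeK4Core.exists_mem {E : Finset (Finset V)} {a b c d : V}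
    (h : IsBergeK4Core E a b c d) (hE : E.card = 6) {e : Finset V} (he : e ∈ E) :
    ∃ u ∈ e, ∃ v ∈ e, u ≠ v ∧ 3 ≤ hdeg E u ∧ 3 ≤ hdeg E v := by
  obtain ⟨da, db, dc, dd⟩ := h.three_le_hdeg
  obtain ⟨hab, hac, had, hbc, hbd, hcd, fab, fac, fad, fbc, fbd, fcd,
    h1, h2, h3, h4, h5, h6, hn, m1, m2, m3, m4, m5, m6, m7, m8, m9, m10, m11, m12⟩ := h
  have hc := List.toFinset_card_of_nodup hn
  have heq : [fab, fac, fad, fbc, fbd, fcd].toFinset = E := by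
    refine Finset.eq_of_subset_of_card_le (fun f hf => ?_) (by rw [hc, hE]; rfl)
    simp only [List.mem_toFinset, List.mem_cons, List.not_mem_nil, or_false] at hf
    rcases hf with rfl | rfl | rfl | rfl | rfl | rfl <;> assumption
  rw [← heq] at he
  simp only [List.mem_toFinset, List.mem_cons, List.not_mem_nil, or_false] at he
  rcases he with rfl | rfl | rfl | rfl | rfl | rfl
  · exact ⟨a, m1, b, m2, hab, da, db⟩
  · exact ⟨a, m3, c, m4, hac, da, dc⟩
  · exact ⟨a, m5, d, m6, had, da, dd⟩
  · exact ⟨b, m7, c, m8, hbc, db, dc⟩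
  · exact ⟨b, m9, d, m10, hbd, db, dd⟩
  · exact ⟨c, m11, d, m12, hcd, dc, dd⟩

/-- The tight cycle on five vertices. -/
def tightCycle : Finset (Finset (Fin 5)) := Finset.univ.image fun i => {i, i + 1, i + 2}

theorem goodPair_tightCycle {u v : Fin 5} (huv : u ≠ v) : GoodPair tightCycle u v := by
  have h1 : ∀ u : Fin 5, GoodPair tightCycle u (u + 1) := fun u =>
    ⟨u + 4, u + 2, by decide +revert, by decide +revert, by decide +revert, by decide +revert,
      by decide +revert, by decide +revert, {u + 3, u + 4, u}, {u, u + 1, u + 2},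
      {u + 4, u, u + 1}, {u + 1, u + 2, u + 3}, {u + 2, u + 3, u + 4}, by decide +revert⟩
  have h2 : ∀ u : Fin 5, GoodPair tightCycle u (u + 2) := fun u =>
    ⟨u + 1, u + 3, by decide +revert, by decide +revert, by decide +revert, by decide +revert,
      by decide +revert, by decide +revert, {u + 4, u, u + 1}, {u + 3, u + 4, u},
      {u, u + 1, u + 2}, {u + 2, u + 3, u + 4}, {u + 1, u + 2, u + 3}, by decide +revert⟩
  have h : v = u + 1 ∨ u = v + 1 ∨ v = u + 2 ∨ u = v + 2 := by decide +revert
  rcases h with rfl | rfl | rfl | rfl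
  · exact h1 u
  · exact (h1 v).symm
  · exact h2 u
  · exact (h2 v).symm

theorem isSaturated_tightCycle : IsSaturated tightCycle := by
  refine ⟨by unfold Is3Uniform; decide, ?_, fun e he heE => ?_⟩
  · rintro ⟨a, b, c, d, h⟩
    exact absurd h.six_le_card (by decide)
  · obtain ⟨u, hu, v, hv, huv⟩ := Finset.one_lt_card.1 (show 1 < e.card by omega)
    exact (goodPair_tightCycle huv).isBergeK4_insert hu hv heE

theorem hubPair_tightCycle : HubPair tightCycle 0 1 := by
  refine ⟨goodPair_tightCycle (by decide), by decide, fun c h0 h1 => ?_⟩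
  have h : c = 2 ∨ c = 3 ∨ c = 4 := by decide +revert
  rcases h with rfl | rfl | rfl
  · exact ⟨{4, 0, 1}, by decide, {0, 1, 2}, by decide, {1, 2, 3}, by decide, by decide⟩
  · exact ⟨{0, 1, 2}, by decide, {3, 4, 0}, by decide, {1, 2, 3}, by decide, by decide⟩
  · exact ⟨{0, 1, 2}, by decide, {3, 4, 0}, by decide, {4, 0, 1}, by decide, by decide⟩

/-- A saturated hypergraph with six vertices and six hyperedges. -/
def sixBase : Finset (Finset (Fin 6)) :=
  {{0, 1, 2}, {0, 1, 3}, {0, 1, 4}, {0, 2, 3}, {0, 2, 5}, {3, 4, 5}}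

theorem goodPair_sixBase {u v : Fin 6} (hu : u < 3) (hv : 3 ≤ v) : GoodPair sixBase u v := by
  have hu : u = 0 ∨ u = 1 ∨ u = 2 := by decide +revert
  have hv : v = 3 ∨ v = 4 ∨ v = 5 := by decide +revert
  rcases hu with rfl | rfl | rfl <;> rcases hv with rfl | rfl | rfl
  · exact ⟨1, 2, by decide, by decide, by decide, by decide, by decide, by decide,
      {0, 1, 4}, {0, 2, 5}, {0, 1, 3}, {0, 2, 3}, {0, 1, 2}, by decide⟩
  · exact ⟨1, 3, by decide, by decide, by decide, by decide, by decide, by decide,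
      {0, 1, 2}, {0, 2, 3}, {0, 1, 4}, {3, 4, 5}, {0, 1, 3}, by decide⟩
  · exact ⟨2, 3, by decide, by decide, by decide, by decide, by decide, by decide,
      {0, 1, 2}, {0, 1, 3}, {0, 2, 5}, {3, 4, 5}, {0, 2, 3}, by decide⟩
  · exact ⟨0, 2, by decide, by decide, by decide, by decide, by decide, by decide,
      {0, 1, 4}, {0, 1, 2}, {0, 1, 3}, {0, 2, 3}, {0, 2, 5}, by decide⟩
  · exact ⟨0, 3, by decide, by decide, by decide, by decide, by decide, by decide,
      {0, 1, 2}, {0, 1, 3}, {0, 1, 4}, {3, 4, 5}, {0, 2, 3}, by decide⟩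
  · exact ⟨0, 3, by decide, by decide, by decide, by decide, by decide, by decide,
      {0, 1, 2}, {0, 1, 3}, {0, 2, 5}, {3, 4, 5}, {0, 2, 3}, by decide⟩
  · exact ⟨0, 1, by decide, by decide, by decide, by decide, by decide, by decide,
      {0, 2, 5}, {0, 1, 2}, {0, 2, 3}, {0, 1, 3}, {0, 1, 4}, by decide⟩
  · exact ⟨0, 3, by decide, by decide, by decide, by decide, by decide, by decide,
      {0, 1, 2}, {0, 2, 3}, {0, 1, 4}, {3, 4, 5}, {0, 1, 3}, by decide⟩
  · exact ⟨0, 3, by decide, by decide, by decide, by decide, by decide, by decide,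
      {0, 1, 2}, {0, 2, 3}, {0, 2, 5}, {3, 4, 5}, {0, 1, 3}, by decide⟩

theorem isSaturated_sixBase : IsSaturated sixBase := by
  refine ⟨by unfold Is3Uniform; decide, ?_, fun e he heE => ?_⟩
  · rintro ⟨a, b, c, d, h⟩
    obtain ⟨u, hu, v, hv, huv, hdu, hdv⟩ :=
      h.exists_mem (by decide) (show {3, 4, 5} ∈ sixBase by decide)
    have key : ∀ w ∈ ({3, 4, 5} : Finset (Fin 6)), 3 ≤ hdeg sixBase w → w = 3 := by decide
    exact huv ((key u hu hdu).trans (key v hv hdv).symm)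
  · have key : ∀ e : Finset (Fin 6), e.card = 3 → e ∉ sixBase →
        ∃ u ∈ e, ∃ v ∈ e, u < 3 ∧ 3 ≤ v := by decide
    obtain ⟨u, hu, v, hv, hu3, hv3⟩ := key e he heE
    exact (goodPair_sixBase hu3 hv3).isBergeK4_insert hu hv heE

theorem hubPair_sixBase : HubPair sixBase 0 3 := by
  refine ⟨goodPair_sixBase (by decide) (by decide), by decide, fun c h0 h3 => ?_⟩
  have h : c = 1 ∨ c = 2 ∨ c = 4 ∨ c = 5 := by decide +revert
  rcases h with rfl | rfl | rfl | rfl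
  · exact ⟨{0, 2, 3}, by decide, {0, 1, 2}, by decide, {0, 1, 3}, by decide, by decide⟩
  · exact ⟨{0, 1, 3}, by decide, {0, 1, 2}, by decide, {0, 2, 3}, by decide, by decide⟩
  · exact ⟨{0, 1, 3}, by decide, {0, 1, 4}, by decide, {3, 4, 5}, by decide, by decide⟩
  · exact ⟨{0, 1, 3}, by decide, {0, 2, 5}, by decide, {3, 4, 5}, by decide, by decide⟩

theorem exists_isSaturated_hubPair {n : ℕ} (hn : 5 ≤ n) :
    ∃ E : Finset (Finset (Fin n)), IsSaturated E ∧ E.card = n ∧ ∃ a b, HubPair E a b := by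
  induction n using Nat.strong_induction_on with
  | _ n ih =>
    obtain rfl | rfl | h : n = 5 ∨ n = 6 ∨ 7 ≤ n := by omega
    · exact ⟨tightCycle, isSaturated_tightCycle, by decide, 0, 1, hubPair_tightCycle⟩
    · exact ⟨sixBase, isSaturated_sixBase, by decide, 0, 3, hubPair_sixBase⟩
    · obtain ⟨m, rfl⟩ : ∃ m, n = m + 2 := ⟨n - 2, by omega⟩
      obtain ⟨E, hE, hcard, a, b, hab⟩ := ih m (by omega) (by omega)
      have hnew : ∀ (i : Fin 2) (v : Fin m), Fin.castAddEmb 2 v ≠ Fin.natAdd m i := fun i v h => by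
        have := v.isLt
        simp [Fin.ext_iff] at h
        omega
      obtain ⟨h1, h2, h3⟩ := hE.isSaturated_addGadget (hnew 0) (hnew 1) (by simp [Fin.ext_iff]) (fun w => by
        induction w using Fin.addCases with
        | left v => exact .inr (.inr ⟨v, rfl⟩)
        | right i =>
          obtain rfl | rfl : i = 0 ∨ i = 1 := by decide +revert
          · exact .inl rfl
          · exact .inr (.inl rfl)) hab
      exact ⟨_, h1, h2.trans (by rw [hcard]), _, _, h3⟩

theorem stmt_18 (n : ℕ) (hn : 96 ≤ n) : satNumber n = n := by
  obtain ⟨E, hE, hcard, -⟩ := exists_isSaturated_hubPair (show 5 ≤ n by omega)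
  refine le_antisymm (Nat.sInf_le ⟨E, hE, hcard⟩) (le_csInf ⟨n, E, hE, hcard⟩ ?_)
  rintro m ⟨F, hF, rfl⟩
  simpa using hF.card_le (by simpa using hn)
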